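/- arXiv:2411.17678 — 5 statements merged into one kernel-verified Lean document; each statement's English description precedes it below -/
import Mathlib

section
/- Let Ω ⊂ ℝ^m be the standard simplex, i.e. the convex hull of {e_0, e_1, …, e_m} where e_0 = 0 and e_1, …, e_m is the standard basis, and for i ∈ {0,1,…,m} let F_i be the relative interior of the facet of Ω opposite to e_i (the set of points expressible as convex combinations ∑_j λ_j e_j with λ_i = 0 and λ_j > 0 for every j ≠ i). Then there exist a Lipschitz function f : Ω → ℝ, an open neighborhood V of ⋃_i F_i, and a constant C depending only on m such that: (a) f is positive and smooth (C^∞) on the interior of Ω; (b) f(x) = dist(x, ∂Ω) for every x ∈ V ∩ Ω; (c) f is Lipschitz on Ω with Lipschitz constant at most C. -/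
open Set Metric

/-- The vertices `e₀ = 0, e₁, …, e_m` of the standard simplex in `ℝ^m`. -/
noncomputable def stdVertex (m : ℕ) : Fin (m + 1) → EuclideanSpace ℝ (Fin m) :=
  fun i => Fin.cases 0 (fun j => EuclideanSpace.single j 1) i

/-- The standard simplex `Ω ⊂ ℝ^m`, the convex hull of `{e₀, e₁, …, e_m}`. -/
noncomputable def stdSimplexSet (m : ℕ) : Set (EuclideanSpace ℝ (Fin m)) :=
  convexHull ℝ (Set.range (stdVertex m))

/-- `F i`, the relative interior of the facet of `Ω` opposite to the vertex `e_i`: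
points which are convex combinations `∑ λ_j e_j` with `λ_i = 0` and `λ_j > 0` for `j ≠ i`. -/
def openFacet (m : ℕ) (i : Fin (m + 1)) : Set (EuclideanSpace ℝ (Fin m)) :=
  {p | ∃ lam : Fin (m + 1) → ℝ, (∑ j, lam j) = 1 ∧ lam i = 0 ∧
    (∀ j, j ≠ i → 0 < lam j) ∧ (∑ j, lam j • stdVertex m j) = p}

namespace SimplexDist

open Filter Topology

set_option linter.unusedSectionVars false

/-- A cut-off function equal to `0` for `r ≤ 1/2` and `1` for `r ≥ 2`. -/
noncomputable def cut (r : ℝ) : ℝ := Real.smoothTransition ((2 * r - 1) / 3)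

lemma cut_zero {r : ℝ} (h : r ≤ 1 / 2) : cut r = 0 :=
  Real.smoothTransition.zero_of_nonpos (by linarith)

lemma cut_one {r : ℝ} (h : 2 ≤ r) : cut r = 1 :=
  Real.smoothTransition.one_of_one_le (by linarith)

lemma cut_nonneg (r : ℝ) : 0 ≤ cut r := Real.smoothTransition.nonneg _

lemma cut_le_one (r : ℝ) : cut r ≤ 1 := Real.smoothTransition.le_one _

lemma cut_contDiff : ContDiff ℝ (⊤ : ℕ∞) cut := by
  unfold cut
  exact Real.smoothTransition.contDiff.comp (by fun_prop)

/-- A smooth minimum of two positive numbers. -/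
noncomputable def smin (a b : ℝ) : ℝ := a + (b - a) * cut (a / b)

lemma min_le_smin (a b : ℝ) : min a b ≤ smin a b := by
  have h0 := cut_nonneg (a / b)
  have h1 := cut_le_one (a / b)
  unfold smin
  rcases le_total a b with h | h
  · rw [min_eq_left h]; nlinarith
  · rw [min_eq_right h]; nlinarith

lemma smin_left {a b : ℝ} (hb : 0 < b) (h : 2 * a ≤ b) : smin a b = a := by
  unfold smin
  rw [cut_zero (by rw [div_le_iff₀ hb]; linarith)]; ring

lemma smin_right {a b : ℝ} (hb : 0 < b) (h : 2 * b ≤ a) : smin a b = b := by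
  unfold smin
  rw [cut_one (by rw [le_div_iff₀ hb]; linarith)]; ring

/-- One-variable Lipschitz criterion. -/
lemma lip_aux (k : ℝ → ℝ) (hk : ContDiffOn ℝ 1 k (Ioi 0))
    (h1 : ∀ r, 0 < r → r ≤ 1 / 2 → k r = r) (h2 : ∀ r, 2 ≤ r → k r = 1) :
    ∃ K : NNReal, LipschitzOnWith K k (Ioi 0) := by
  have hc : ContinuousOn (deriv k) (Ioi 0) :=
    hk.continuousOn_deriv_of_isOpen isOpen_Ioi le_rfl
  obtain ⟨B, hB⟩ := (isCompact_Icc (a := (1 / 2 : ℝ)) (b := 2)).exists_bound_of_continuousOn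
    (hc.mono (fun x hx => by simp only [mem_Ioi]; linarith [hx.1]))
  refine ⟨Real.toNNReal (max B 1), ?_⟩
  apply Convex.lipschitzOnWith_of_nnnorm_deriv_le (𝕜 := ℝ) (s := Ioi (0 : ℝ))
  · intro x hx
    exact (hk.differentiableOn (by simp) x hx).differentiableAt (isOpen_Ioi.mem_nhds hx)
  · intro x hx
    rw [← NNReal.coe_le_coe, coe_nnnorm,
      Real.coe_toNNReal _ (le_trans zero_le_one (le_max_right _ _))]
    rcases lt_or_ge x (1 / 2) with h | h
    · have : k =ᶠ[𝓝 x] id := by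
        filter_upwards [Ioo_mem_nhds (mem_Ioi.1 hx) h] with y hy
        exact h1 y hy.1 hy.2.le
      rw [this.deriv_eq]; simp
    rcases le_or_gt x 2 with h' | h'
    · exact (hB x ⟨h, h'⟩).trans (le_max_left _ _)
    · have : k =ᶠ[𝓝 x] fun _ => 1 := by
        filter_upwards [Ioi_mem_nhds h'] with y hy
        exact h2 y (mem_Ioi.1 hy).le
      rw [this.deriv_eq]; simp
  · exact convex_Ioi 0

lemma smin_lip : ∃ K : NNReal, ∀ a b a' b' : ℝ, 0 < a → 0 < b → 0 < a' → 0 < b' →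
    |smin a b - smin a' b'| ≤ K * |a - a'| + K * |b - b'| := by
  have hcut : ContDiff ℝ 1 cut := cut_contDiff.of_le (by exact_mod_cast le_top)
  obtain ⟨K₁, hK₁⟩ := lip_aux (fun r => r + (1 - r) * cut r)
    (ContDiff.contDiffOn (by fun_prop))
    (fun r _ h => by simp [cut_zero h]) (fun r h => by simp [cut_one h])
  obtain ⟨K₂, hK₂⟩ := lip_aux (fun s => 1 + (s - 1) * cut (1 / s))
    (by
      have : ContDiffOn ℝ 1 (fun s : ℝ => 1 / s) (Ioi 0) :=
        contDiffOn_const.div contDiffOn_id (fun x hx => (mem_Ioi.1 hx).ne')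
      have h3 := hcut.comp_contDiffOn this
      exact contDiffOn_const.add ((contDiffOn_id.sub contDiffOn_const).mul h3))
    (fun r h0 h => by
      have : cut (1 / r) = 1 := cut_one (by rw [le_div_iff₀ h0]; linarith)
      simp only [this]; ring)
    (fun r h => by
      have : cut (1 / r) = 0 := cut_zero (by rw [div_le_iff₀ (by linarith)]; linarith)
      simp only [this]; ring)
  refine ⟨max K₁ K₂, ?_⟩
  intro a b a' b' ha hb ha' hb'
  have e1 : |smin a b - smin a' b| ≤ K₁ * |a - a'| := by
    have h := hK₁.dist_le_mul (a / b) (div_pos ha hb) (a' / b) (div_pos ha' hb)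
    simp only [Real.dist_eq] at h
    have f1 : smin a b - smin a' b = b * ((a / b + (1 - a / b) * cut (a / b)) -
        (a' / b + (1 - a' / b) * cut (a' / b))) := by
      unfold smin; field_simp
    have f2 : |a - a'| = b * |a / b - a' / b| := by
      rw [← abs_of_pos hb, ← abs_mul, abs_of_pos hb]; congr 1; field_simp
    rw [f1, f2, abs_mul, abs_of_pos hb]
    nlinarith
  have e2 : |smin a' b - smin a' b'| ≤ K₂ * |b - b'| := by
    have h := hK₂.dist_le_mul (b / a') (div_pos hb ha') (b' / a') (div_pos hb' ha')
    simp only [Real.dist_eq, one_div_div] at h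
    have f1 : smin a' b - smin a' b' = a' * ((1 + (b / a' - 1) * cut (a' / b)) -
        (1 + (b' / a' - 1) * cut (a' / b'))) := by
      unfold smin; field_simp
    have f2 : |b - b'| = a' * |b / a' - b' / a'| := by
      rw [← abs_of_pos ha', ← abs_mul, abs_of_pos ha']; congr 1; field_simp
    rw [f1, f2, abs_mul, abs_of_pos ha']
    nlinarith
  have m1 : (K₁ : ℝ) ≤ (max K₁ K₂ : NNReal) := NNReal.coe_le_coe.2 (le_max_left _ _)
  have m2 : (K₂ : ℝ) ≤ (max K₁ K₂ : NNReal) := NNReal.coe_le_coe.2 (le_max_right _ _)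
  have := abs_sub_le (smin a b) (smin a' b) (smin a' b')
  nlinarith [abs_nonneg (a - a'), abs_nonneg (b - b')]

variable {E : Type*} [NormedAddCommGroup E] [InnerProductSpace ℝ E]

lemma exists_smooth_min {ι : Type*} [DecidableEq ι] (U : Set E) (u : ι → E → ℝ)
    (hu : ∀ i, ContDiffOn ℝ (⊤ : ℕ∞) (u i) U) (hp : ∀ i, ∀ x ∈ U, 0 < u i x)
    (hl : ∀ i, ∃ K : NNReal, LipschitzOnWith K (u i) U) (s : Finset ι) (hs : s.Nonempty) :
    ∃ G : E → ℝ, ContDiffOn ℝ (⊤ : ℕ∞) G U ∧ (∃ K : NNReal, LipschitzOnWith K G U) ∧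
      (∀ x ∈ U, ∃ i ∈ s, u i x ≤ G x) ∧
      (∀ x ∈ U, ∀ i ∈ s, (∀ j ∈ s, j ≠ i → 2 * u i x ≤ u j x) → G x = u i x) := by
  induction hs using Finset.Nonempty.cons_induction with
  | singleton a =>
    exact ⟨u a, hu a, hl a, fun x _ => ⟨a, by simp, le_rfl⟩, by simp⟩
  | cons a s ha hs ih =>
    obtain ⟨G, hG, ⟨K, hK⟩, hle, heq⟩ := ih
    obtain ⟨L, hL⟩ := hl a
    obtain ⟨M, hM⟩ := smin_lip
    have hGp : ∀ x ∈ U, 0 < G x := fun x hx => by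
      obtain ⟨i, _, h⟩ := hle x hx
      exact (hp i x hx).trans_le h
    refine ⟨fun x => smin (G x) (u a x), ?_, ⟨M * K + M * L, ?_⟩, ?_, ?_⟩
    · unfold smin
      exact hG.add (((hu a).sub hG).mul
        (cut_contDiff.comp_contDiffOn (hG.div (hu a) (fun x hx => (hp a x hx).ne'))))
    · apply LipschitzOnWith.of_dist_le_mul
      intro x hx y hy
      have h := hM (G x) (u a x) (G y) (u a y) (hGp x hx) (hp a x hx) (hGp y hy) (hp a y hy)
      have h1 := hK.dist_le_mul x hx y hy
      have h2 := hL.dist_le_mul x hx y hy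
      rw [Real.dist_eq] at h1 h2 ⊢
      push_cast
      calc _ ≤ _ := h
        _ ≤ (M : ℝ) * (K * dist x y) + M * (L * dist x y) := by gcongr
        _ = _ := by ring
    · intro x hx
      have h := min_le_smin (G x) (u a x)
      rcases le_total (G x) (u a x) with h' | h'
      · obtain ⟨i, hi, hi'⟩ := hle x hx
        rw [min_eq_left h'] at h
        exact ⟨i, by simp [hi], hi'.trans h⟩
      · rw [min_eq_right h'] at h
        exact ⟨a, by simp, h⟩
    · intro x hx i hi hj
      rw [Finset.mem_cons] at hi
      rcases hi with rfl | hi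
      · apply smin_right (hp i x hx)
        obtain ⟨j, hj1, hj2⟩ := hle x hx
        exact (hj j (by simp [hj1]) (fun e => ha (e ▸ hj1))).trans hj2
      · have := heq x hx i hi (fun j hjs hji => hj j (by simp [hjs]) hji)
        simp only [this]
        exact smin_left (hp a x hx) (hj a (by simp) (fun e => ha (e ▸ hi)))

section poly

variable {ι : Type*} [Fintype ι] [Nonempty ι] (n : ι → E) (c : ι → ℝ)

/-- Signed distance to the `i`th hyperplane. -/
noncomputable def dd (i : ι) (x : E) : ℝ := c i + inner ℝ (n i) x

lemma dd_add (hn : ∀ i, ‖n i‖ = 1) (i : ι) (x : E) (t : ℝ) :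
    dd n c i (x + t • n i) = dd n c i x + t := by
  simp [dd, inner_add_right, inner_smul_right, hn]; ring

lemma dd_cont (i : ι) : Continuous (dd n c i) := by
  unfold dd; fun_prop

lemma dd_sub_le (hn : ∀ i, ‖n i‖ = 1) (i : ι) (x y : E) :
    dd n c i x - dd n c i y ≤ dist x y := by
  have := real_inner_le_norm (n i) (x - y)
  rw [hn, one_mul, ← dist_eq_norm, inner_sub_right] at this
  unfold dd; linarith

lemma dd_lip (hn : ∀ i, ‖n i‖ = 1) (i : ι) : LipschitzWith 1 (dd n c i) := by
  apply LipschitzWith.of_le_add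
  intro x y
  linarith [dd_sub_le n c hn i x y]

/-- The polyhedron. -/
def poly : Set E := {x | ∀ i, 0 ≤ dd n c i x}

lemma interior_poly (hn : ∀ i, ‖n i‖ = 1) :
    interior (poly n c) = {x | ∀ i, 0 < dd n c i x} := by
  apply Subset.antisymm
  · intro x hx i
    by_contra! h
    have ht : Tendsto (fun t : ℝ => x + t • n i) (𝓝[<] 0) (𝓝 x) := by
      have : Continuous (fun t : ℝ => x + t • n i) := by fun_prop
      have h2 := this.tendsto 0
      simp only [zero_smul, add_zero] at h2
      exact h2.mono_left nhdsWithin_le_nhds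
    have h3 := ht.eventually (isOpen_interior.mem_nhds hx)
    obtain ⟨t, ht1, ht2⟩ := (h3.and self_mem_nhdsWithin).exists
    have h4 := (interior_subset ht1) i
    rw [dd_add n c hn] at h4
    have : t < 0 := ht2
    linarith
  · apply interior_maximal
    · intro x hx i
      exact (hx i).le
    · simp only [ofPred_forall]
      exact isOpen_iInter_of_finite fun i => isOpen_lt continuous_const (dd_cont n c i)

lemma infDist_poly (hn : ∀ i, ‖n i‖ = 1) (x : E) (hx : x ∈ interior (poly n c)) (i : ι)
    (hi : ∀ j, dd n c i x ≤ dd n c j x) :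
    infDist x (frontier (poly n c)) = dd n c i x := by
  have hcl : IsClosed (poly n c) := by
    unfold poly
    simp only [ofPred_forall]
    exact isClosed_iInter fun i => isClosed_le continuous_const (dd_cont n c i)
  rw [hcl.frontier_eq, interior_poly n c hn]
  rw [interior_poly n c hn] at hx
  have hp : x + (-dd n c i x) • n i ∈ poly n c \ {x | ∀ i, 0 < dd n c i x} := by
    constructor
    · intro j
      have h := dd_sub_le n c hn j x (x + (-dd n c i x) • n i)
      rw [dist_eq_norm] at h
      simp only [sub_add_cancel_left, norm_neg, norm_smul, hn, mul_one, Real.norm_eq_abs,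
        abs_of_pos (hx i)] at h
      linarith [hi j]
    · intro h
      have := h i
      rw [dd_add n c hn] at this
      linarith
  apply le_antisymm
  · refine (infDist_le_dist_of_mem hp).trans ?_
    rw [dist_eq_norm]
    simp [norm_smul, hn, abs_of_pos (hx i)]
  · rw [le_infDist ⟨_, hp⟩]
    intro y hy
    have : ∃ j, dd n c j y ≤ 0 := by
      by_contra! h
      exact hy.2 h
    obtain ⟨j, hj⟩ := this
    linarith [dd_sub_le n c hn j x y, hi j]

/-- The neighbourhood of the open facets. -/
def nbhd : Set E := {x | ∃ i, ∀ j, j ≠ i → 2 * |dd n c i x| < dd n c j x}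

lemma main_poly (hn : ∀ i, ‖n i‖ = 1) :
    ∃ (f : E → ℝ) (C : NNReal),
      IsOpen (nbhd n c) ∧
      (∀ x ∈ interior (poly n c), 0 < f x) ∧
      ContDiffOn ℝ (⊤ : ℕ∞) f (interior (poly n c)) ∧
      (∀ x ∈ nbhd n c ∩ poly n c, f x = Metric.infDist x (frontier (poly n c))) ∧
      LipschitzOnWith C f (poly n c) := by
  classical
  have hIntr := interior_poly n c hn
  have hsm : ∀ i, ContDiff ℝ (⊤ : ℕ∞) (dd n c i) := fun i => by
    unfold dd
    exact contDiff_const.add (contDiff_const.inner ℝ contDiff_id)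
  obtain ⟨G, hG, ⟨K, hK⟩, hle, heq⟩ := exists_smooth_min (interior (poly n c)) (dd n c)
    (fun i => (hsm i).contDiffOn) (fun i x hx => by rw [hIntr] at hx; exact hx i)
    (fun i => ⟨1, (dd_lip n c hn i).lipschitzOnWith⟩) Finset.univ Finset.univ_nonempty
  obtain ⟨f, hf, hfG⟩ := hK.extend_real
  have hopen : ∀ i, IsOpen {x | ∀ j, j ≠ i → 2 * |dd n c i x| < dd n c j x} := fun i => by
    simp only [ofPred_forall]
    refine isOpen_iInter_of_finite fun j => isOpen_iInter_of_finite fun _ => ?_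
    exact isOpen_lt (continuous_const.mul (dd_cont n c i).abs) (dd_cont n c j)
  refine ⟨f, K, ?_, ?_, hG.congr (fun x hx => (hfG hx).symm), ?_, hf.lipschitzOnWith⟩
  · unfold nbhd
    rw [ofPred_exists]
    exact isOpen_iUnion hopen
  · intro x hx
    rw [← hfG hx]
    obtain ⟨i, _, hi⟩ := hle x hx
    rw [hIntr] at hx
    exact (hx i).trans_le hi
  · rintro x ⟨⟨i, hi⟩, hx⟩
    have ht : Tendsto (fun t : ℝ => x + t • n i) (𝓝[>] 0) (𝓝 x) := by
      have : Continuous (fun t : ℝ => x + t • n i) := by fun_prop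
      have h2 := this.tendsto 0
      simp only [zero_smul, add_zero] at h2
      exact h2.mono_left nhdsWithin_le_nhds
    have h1 := (hf.continuous.tendsto x).comp ht
    have h2 := ((continuous_infDist_pt (frontier (poly n c))).tendsto x).comp ht
    refine tendsto_nhds_unique_of_eventuallyEq h1 h2 ?_
    filter_upwards [ht.eventually ((hopen i).mem_nhds hi), self_mem_nhdsWithin] with t h3 h4
    have h4 : 0 < t := h4
    simp only [Function.comp]
    have hpos : 0 < dd n c i (x + t • n i) := by
      rw [dd_add n c hn]; linarith [hx i]
    have h5 : ∀ j, j ≠ i → 2 * dd n c i (x + t • n i) < dd n c j (x + t • n i) := fun j hj => by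
      have := h3 j hj
      rwa [abs_of_pos hpos] at this
    have hin : x + t • n i ∈ interior (poly n c) := by
      rw [hIntr]
      intro j
      by_cases hj : j = i
      · rw [hj]; exact hpos
      · linarith [h5 j hj]
    rw [← hfG hin, heq _ hin i (Finset.mem_univ _) (fun j _ hj => (h5 j hj).le),
      infDist_poly n c hn _ hin i]
    intro j
    by_cases hj : j = i
    · rw [hj]
    · linarith [h5 j hj]

end poly

/-- Inner unit normals of the standard simplex. -/
noncomputable def nrm (m : ℕ) : Fin (m + 1) → EuclideanSpace ℝ (Fin m) :=
  fun i => Fin.cases (WithLp.toLp 2 (fun _ => -(1 / √(m : ℝ))))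
    (fun j => EuclideanSpace.single j 1) i

/-- Constants of the facets. -/
noncomputable def cst (m : ℕ) : Fin (m + 1) → ℝ :=
  fun i => Fin.cases (1 / √(m : ℝ)) (fun _ => 0) i

lemma nrm_norm (m : ℕ) (hm : 0 < m) (i : Fin (m + 1)) : ‖nrm m i‖ = 1 := by
  have hm' : (0 : ℝ) < m := by exact_mod_cast hm
  refine Fin.cases ?_ (fun j => ?_) i
  · simp [nrm, EuclideanSpace.norm_eq, hm'.ne']
  · simp [nrm]

lemma dd_zero (m : ℕ) (x : EuclideanSpace ℝ (Fin m)) :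
    dd (nrm m) (cst m) 0 x = (1 / √(m : ℝ)) * (1 - ∑ j, x j) := by
  simp only [dd, nrm, cst, Fin.cases_zero, PiLp.inner_apply, RCLike.inner_apply, conj_trivial]
  rw [← Finset.sum_mul]; ring

lemma dd_succ (m : ℕ) (j : Fin m) (x : EuclideanSpace ℝ (Fin m)) :
    dd (nrm m) (cst m) j.succ x = x j := by
  simp [dd, nrm, cst, EuclideanSpace.inner_single_left]

lemma sum_vertex (m : ℕ) (lam : Fin (m + 1) → ℝ) (k : Fin m) :
    (∑ j, lam j • stdVertex m j) k = lam k.succ := by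
  rw [Fin.sum_univ_succ]
  simp [stdVertex, Pi.single_apply]

lemma dd_comb (m : ℕ) (lam : Fin (m + 1) → ℝ) (h : ∑ j, lam j = 1) (i : Fin (m + 1)) :
    dd (nrm m) (cst m) i (∑ j, lam j • stdVertex m j) =
      (Fin.cases (1 / √(m : ℝ)) (fun _ => 1) i : ℝ) * lam i := by
  refine Fin.cases ?_ (fun k => ?_) i
  · rw [dd_zero]
    simp only [sum_vertex, Fin.cases_zero]
    rw [Fin.sum_univ_succ] at h
    rw [← h]; ring
  · rw [dd_succ, sum_vertex]; simp

lemma fac_pos (m : ℕ) (hm : 0 < m) (i : Fin (m + 1)) :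
    0 < (Fin.cases (1 / √(m : ℝ)) (fun _ => 1) i : ℝ) := by
  have hm' : (0 : ℝ) < m := by exact_mod_cast hm
  refine Fin.cases ?_ (fun k => ?_) i
  · simp only [Fin.cases_zero]; positivity
  · simp

lemma simplex_eq (m : ℕ) (hm : 0 < m) : stdSimplexSet m = poly (nrm m) (cst m) := by
  have hm' : (0 : ℝ) < m := by exact_mod_cast hm
  apply Subset.antisymm
  · apply convexHull_min
    · rintro _ ⟨k, rfl⟩ i
      have h := dd_comb m (Pi.single k 1) (by simp) i
      have e : ∑ j, (Pi.single k 1 : Fin (m + 1) → ℝ) j • stdVertex m j = stdVertex m k := by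
        simp [Pi.single_apply]
      rw [e] at h
      rw [h]
      refine mul_nonneg (fac_pos m hm i).le ?_
      rw [Pi.single_apply]; split_ifs <;> norm_num
    · intro x hx y hy a b ha hb hab i
      have : dd (nrm m) (cst m) i (a • x + b • y) =
          a * dd (nrm m) (cst m) i x + b * dd (nrm m) (cst m) i y := by
        simp only [dd, inner_add_right, inner_smul_right]
        linear_combination (-cst m i) * hab
      rw [this]
      exact add_nonneg (mul_nonneg ha (hx i)) (mul_nonneg hb (hy i))
  · intro x hx
    have h0 := hx 0
    rw [dd_zero] at h0
    have h0' : 0 ≤ 1 - ∑ j, x j := nonneg_of_mul_nonneg_right h0 (by positivity)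
    have e : x = ∑ i, (Fin.cons (1 - ∑ j, x j) (fun j => x j) : Fin (m + 1) → ℝ) i •
        stdVertex m i := by
      ext k
      rw [sum_vertex]; simp
    rw [e]
    apply (convex_convexHull ℝ _).sum_mem
    · intro i _
      refine Fin.cases ?_ (fun k => ?_) i
      · simpa using h0'
      · have := hx k.succ
        rw [dd_succ] at this
        simpa using this
    · rw [Fin.sum_univ_succ]; simp
    · intro i _
      exact subset_convexHull ℝ _ ⟨i, rfl⟩

lemma facet_sub (m : ℕ) (hm : 0 < m) : (⋃ i, openFacet m i) ⊆ nbhd (nrm m) (cst m) := by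
  intro x hx
  obtain ⟨i, lam, h1, h2, h3, rfl⟩ := mem_iUnion.1 hx
  refine ⟨i, fun j hj => ?_⟩
  rw [dd_comb m lam h1, dd_comb m lam h1, h2]
  simpa using mul_pos (fac_pos m hm j) (h3 j hj)

end SimplexDist

/-- There are a Lipschitz function `f : Ω → ℝ`, a neighborhood `V` of `⋃ i, F i`, and a constant
`C = C(m)` such that `f` is positive and smooth in the interior of `Ω`, coincides with
`dist (·, ∂Ω)` on `V ∩ Ω`, and is `C`-Lipschitz on `Ω`. -/
theorem statement0 (m : ℕ) (hm : 0 < m) :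
    ∃ (f : EuclideanSpace ℝ (Fin m) → ℝ) (V : Set (EuclideanSpace ℝ (Fin m))) (C : NNReal),
      IsOpen V ∧ (⋃ i, openFacet m i) ⊆ V ∧
      (∀ x ∈ interior (stdSimplexSet m), 0 < f x) ∧
      ContDiffOn ℝ (⊤ : ℕ∞) f (interior (stdSimplexSet m)) ∧
      (∀ x ∈ V ∩ stdSimplexSet m, f x = Metric.infDist x (frontier (stdSimplexSet m))) ∧
      LipschitzOnWith C f (stdSimplexSet m) := by
  obtain ⟨f, C, h1, h2, h3, h4, h5⟩ :=
    SimplexDist.main_poly (SimplexDist.nrm m) (SimplexDist.cst m) (SimplexDist.nrm_norm m hm)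
  rw [SimplexDist.simplex_eq m hm]
  exact ⟨f, _, C, h1, SimplexDist.facet_sub m hm, h2, h3, h4, h5⟩
end

section
/- Let Ω ⊂ ℝ^m be the standard simplex, i.e. the convex hull of {e_0, e_1, …, e_m} where e_0 = 0 and e_1, …, e_m is the standard basis. For j ∈ {1,…,m} let π_j be the hyperplane {x ∈ ℝ^m : x_j = 0}, let π_0 be the hyperplane {x ∈ ℝ^m : x_1 + ⋯ + x_m = 1}, and let Ω^{m−2} be the set of points of Ω that lie on at least two of the hyperplanes π_0, π_1, …, π_m (equivalently, points whose barycentric coordinates vanish in at least two indices). Then there exist a constant ε_0 > 0 (sufficiently small) and a constant C_0 > 0 (sufficiently large), both depending only on m, such that for every i ∈ {0,1,…,m} and every point p ∈ Ω satisfying dist(p, π_i) < ε_0 and C_0 · dist(p, π_i) < dist(p, Ω^{m−2}), one has dist(p, ∂Ω) = dist(p, π_i). -/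
open Set Metric

/-- The supporting hyperplanes of the standard simplex: `π 0 = {x : ∑ x_j = 1}` and
`π j = {x : x_j = 0}` for `j = 1, …, m`. -/
def simplexHyperplane (m : ℕ) : Fin (m + 1) → Set (EuclideanSpace ℝ (Fin m)) :=
  fun i => Fin.cases {x : EuclideanSpace ℝ (Fin m) | (∑ j, x j) = 1}
    (fun j => {x : EuclideanSpace ℝ (Fin m) | x j = 0}) i

/-- The `(m-2)`-skeleton `Ω^{m-2}`: points of `Ω` lying on at least two of the hyperplanes. -/
noncomputable def simplexSkeleton (m : ℕ) : Set (EuclideanSpace ℝ (Fin m)) :=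
  {p ∈ stdSimplexSet m | ∃ i j : Fin (m + 1), i ≠ j ∧
    p ∈ simplexHyperplane m i ∧ p ∈ simplexHyperplane m j}

/-- Barycentric coordinates. -/
noncomputable def bary (m : ℕ) (i : Fin (m + 1)) (x : EuclideanSpace ℝ (Fin m)) : ℝ :=
  Fin.cases (1 - ∑ j, x j) (fun j => x j) i

lemma bary_affine (m : ℕ) (i : Fin (m + 1)) (x y z : EuclideanSpace ℝ (Fin m)) (t : ℝ) :
    bary m i (x + t • (y - z)) = bary m i x + t * (bary m i y - bary m i z) := by
  refine Fin.cases ?_ (fun j => ?_) i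
  · simp [bary, Finset.sum_add_distrib, ← Finset.mul_sum]
    ring
  · simp [bary]

lemma bary_vertex (m : ℕ) (i j : Fin (m + 1)) :
    bary m i (stdVertex m j) = if i = j then 1 else 0 := by
  refine Fin.cases ?_ (fun i => ?_) i <;> refine Fin.cases ?_ (fun j => ?_) j
  · simp [bary, stdVertex]
  · simp [bary, stdVertex, (Fin.succ_ne_zero j).symm]
  · simp [bary, stdVertex]
  · simp [bary, stdVertex, Pi.single_apply]

lemma mem_hyper (m : ℕ) (i : Fin (m + 1)) (x : EuclideanSpace ℝ (Fin m)) :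
    x ∈ simplexHyperplane m i ↔ bary m i x = 0 := by
  refine Fin.cases ?_ (fun j => ?_) i
  · simp only [simplexHyperplane, bary, Fin.cases_zero, Set.mem_ofPred_eq]
    constructor <;> intro h <;> linarith
  · simp [simplexHyperplane, bary]

lemma bary_cont (m : ℕ) (i : Fin (m + 1)) : Continuous (bary m i) := by
  refine Fin.cases ?_ (fun j => ?_) i
  · change Continuous fun x : EuclideanSpace ℝ (Fin m) => 1 - ∑ j, x j
    fun_prop
  · change Continuous fun x : EuclideanSpace ℝ (Fin m) => x j
    fun_prop

lemma bary_sum (m : ℕ) (x : EuclideanSpace ℝ (Fin m)) : ∑ i, bary m i x = 1 := by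
  simp [Fin.sum_univ_succ, bary]

lemma mem_simplex (m : ℕ) (x : EuclideanSpace ℝ (Fin m)) :
    x ∈ stdSimplexSet m ↔ ∀ i, 0 ≤ bary m i x := by
  constructor
  · intro h i
    have hc : Convex ℝ {y : EuclideanSpace ℝ (Fin m) | 0 ≤ bary m i y} := by
      intro y hy z hz a b ha hb hab
      have : a • y + b • z = y + b • (z - y) := by
        have : a = 1 - b := by linarith
        subst this; module
      simp only [Set.mem_ofPred_eq] at *
      rw [this, bary_affine]
      have : a = 1 - b := by linarith
      subst this
      nlinarith [mul_nonneg ha hy, mul_nonneg hb hz]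
    refine convexHull_min ?_ hc h
    rintro _ ⟨j, rfl⟩
    simp only [Set.mem_ofPred_eq, bary_vertex]
    split_ifs <;> norm_num
  · intro h
    have hx : x = ∑ i, bary m i x • stdVertex m i := by
      ext j
      simp [Fin.sum_univ_succ, bary, stdVertex, Pi.single_apply]
    rw [hx]
    exact (convex_convexHull ℝ _).sum_mem (fun i _ => h i) (bary_sum m x)
      (fun i _ => subset_convexHull ℝ _ ⟨i, rfl⟩)

lemma simplex_closed (m : ℕ) : IsClosed (stdSimplexSet m) := by
  have : stdSimplexSet m = ⋂ i, {x | 0 ≤ bary m i x} := by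
    ext x; simp [mem_simplex]
  rw [this]
  exact isClosed_iInter fun i => isClosed_le continuous_const (bary_cont m i)

lemma frontier_sub (m : ℕ) (x : EuclideanSpace ℝ (Fin m)) (hx : x ∈ frontier (stdSimplexSet m)) :
    ∃ i, x ∈ simplexHyperplane m i := by
  by_contra! hcon
  rw [(simplex_closed m).frontier_eq] at hx
  apply hx.2
  have ho : IsOpen (⋂ i, {x | 0 < bary m i x}) :=
    isOpen_iInter_of_finite fun i => isOpen_lt continuous_const (bary_cont m i)
  refine interior_maximal ?_ ho ?_
  · intro y hy
    rw [mem_simplex]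
    intro i
    exact (Set.mem_iInter.1 hy i).le
  · refine Set.mem_iInter.2 fun i => ?_
    have h1 := (mem_simplex m x).1 hx.1 i
    have h2 := hcon i
    rw [mem_hyper] at h2
    exact lt_of_le_of_ne h1 (Ne.symm h2)

lemma hyper_not_interior (m : ℕ) (i : Fin (m + 1)) (q : EuclideanSpace ℝ (Fin m))
    (hq : q ∈ simplexHyperplane m i) : q ∉ interior (stdSimplexSet m) := by
  intro hint
  rw [mem_interior_iff_mem_nhds] at hint
  have hc : Filter.Tendsto (fun t : ℝ => q + t • (q - stdVertex m i)) (nhds 0) (nhds q) := by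
    have : Continuous (fun t : ℝ => q + t • (q - stdVertex m i)) := by fun_prop
    simpa using this.tendsto 0
  have h1 : ∀ᶠ t in nhdsWithin (0 : ℝ) (Set.Ioi 0), q + t • (q - stdVertex m i) ∈ stdSimplexSet m :=
    (hc.mono_left nhdsWithin_le_nhds).eventually hint
  obtain ⟨t, ht, ht0⟩ := (h1.and self_mem_nhdsWithin).exists
  have h2 := (mem_simplex m _).1 ht i
  rw [bary_affine, (mem_hyper m i q).1 hq, bary_vertex] at h2
  simp at h2 ht0
  linarith

lemma frontier_between {E : Type*} [NormedAddCommGroup E] [NormedSpace ℝ E] (S : Set E) (p q : E)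
    (hp : p ∈ S) (hq : q ∉ interior S) : infDist p (frontier S) ≤ dist p q := by
  by_cases hqS : q ∈ S
  · exact infDist_le_dist_of_mem ⟨subset_closure hqS, hq⟩
  · obtain ⟨x, hx, hxf⟩ : ∃ x ∈ segment ℝ p q, x ∈ frontier S := by
      by_contra! hcon
      have hpi : p ∈ interior S := by
        by_contra hpi
        exact hcon p (left_mem_segment ℝ p q) ⟨subset_closure hp, hpi⟩
      have hqc : q ∈ (closure S)ᶜ := fun hqc => hcon q (right_mem_segment ℝ p q) ⟨hqc, hq⟩
      obtain ⟨y, -, hy1, hy2⟩ := (convex_segment (𝕜 := ℝ) p q).isPreconnected (interior S)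
        (closure S)ᶜ isOpen_interior isClosed_closure.isOpen_compl (fun y hy => by
          by_contra hy'
          simp only [Set.mem_union, Set.mem_compl_iff, not_or, not_not] at hy'
          exact hcon y hy ⟨hy'.2, hy'.1⟩)
        ⟨p, left_mem_segment ℝ p q, hpi⟩ ⟨q, right_mem_segment ℝ p q, hqc⟩
      exact hy2 (subset_closure (interior_subset hy1))
    refine (infDist_le_dist_of_mem hxf).trans ?_
    have : segment ℝ p q ⊆ closedBall p (dist p q) :=
      (convex_closedBall p _).segment_subset (mem_closedBall_self dist_nonneg)
        (by simp [mem_closedBall, dist_comm])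
    have := this hx
    rwa [mem_closedBall, dist_comm] at this

lemma hyper_nonempty (m : ℕ) (hm : 0 < m) (i : Fin (m + 1)) : (simplexHyperplane m i).Nonempty := by
  have : Nontrivial (Fin (m + 1)) := Fin.nontrivial_iff_two_le.2 (by omega)
  obtain ⟨j, hj⟩ := exists_ne i
  exact ⟨stdVertex m j, by rw [mem_hyper, bary_vertex, if_neg hj.symm]⟩

lemma bary_le (m : ℕ) (hm : 0 < m) (i : Fin (m + 1)) (p : EuclideanSpace ℝ (Fin m)) :
    bary m i p ≤ m * infDist p (simplexHyperplane m i) := by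
  have hm1 : (1 : ℝ) ≤ m := by exact_mod_cast hm
  have hm0 : (0 : ℝ) < m := by linarith
  rw [← div_le_iff₀' hm0, le_infDist (hyper_nonempty m hm i)]
  intro q hq
  rw [div_le_iff₀' hm0]
  have key : ∀ j, |p j - q j| ≤ dist p q := by
    intro j
    rw [dist_eq_norm]
    simpa using PiLp.norm_apply_le (p - q) j
  rw [mem_hyper] at hq
  revert hq
  refine Fin.cases ?_ (fun j => ?_) i
  · simp only [bary, Fin.cases_zero]
    intro hq
    have : ∑ j, (q j - p j) ≤ ∑ _j : Fin m, dist p q :=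
      Finset.sum_le_sum fun j _ => by have := abs_le.1 (key j); linarith
    simp [Finset.sum_sub_distrib] at this
    linarith
  · simp only [bary, Fin.cases_succ]
    intro hq
    have := abs_le.1 (key j)
    nlinarith [dist_nonneg (x := p) (y := q)]

lemma vertex_norm (m : ℕ) (i : Fin (m + 1)) : ‖stdVertex m i‖ ≤ 1 := by
  refine Fin.cases ?_ (fun j => ?_) i <;> simp [stdVertex]

lemma skel_le (m : ℕ) (hm : 2 ≤ m) (i k : Fin (m + 1)) (hik : i ≠ k)
    (p : EuclideanSpace ℝ (Fin m)) (hp : p ∈ stdSimplexSet m) :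
    infDist p (simplexSkeleton m) ≤ 2 * (bary m i p + bary m k p) := by
  obtain ⟨l, hl⟩ : ∃ l, l ∉ ({i, k} : Finset (Fin (m + 1))) := by
    by_contra! h
    have h1 := Finset.card_le_card (fun x _ => h x : (Finset.univ : Finset (Fin (m + 1))) ⊆ {i, k})
    have h2 := Finset.card_le_two (a := i) (b := k)
    simp at h1
    omega
  simp only [Finset.mem_insert, Finset.mem_singleton, not_or] at hl
  obtain ⟨hli, hlk⟩ := hl
  have hpos := (mem_simplex m p).1 hp
  set a := bary m i p with ha
  set b := bary m k p with hb
  set q := p + a • (stdVertex m l - stdVertex m i) + b • (stdVertex m l - stdVertex m k) with hqd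
  have hq : ∀ j, bary m j q = bary m j p + a * ((if j = l then 1 else 0) - if j = i then 1 else 0)
      + b * ((if j = l then 1 else 0) - if j = k then 1 else 0) := by
    intro j
    rw [hqd, bary_affine, bary_affine]
    simp only [bary_vertex]
  have hqi : bary m i q = 0 := by
    rw [hq]; simp [Ne.symm hli, hik, ← ha]
  have hqk : bary m k q = 0 := by
    rw [hq]; simp [Ne.symm hlk, hik.symm, ← hb]
  have ha0 : 0 ≤ a := hpos i
  have hb0 : 0 ≤ b := hpos k
  have hmem : q ∈ simplexSkeleton m := by
    refine ⟨(mem_simplex m q).2 fun j => ?_, i, k, hik, (mem_hyper _ _ _).2 hqi,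
      (mem_hyper _ _ _).2 hqk⟩
    by_cases hji : j = i
    · rw [hji, hqi]
    by_cases hjk : j = k
    · rw [hjk, hqk]
    rw [hq]
    have := hpos j
    split_ifs <;> simp <;> linarith
  refine (infDist_le_dist_of_mem hmem).trans ?_
  have hd : dist p q = ‖a • (stdVertex m l - stdVertex m i) + b • (stdVertex m l - stdVertex m k)‖ := by
    rw [dist_comm, dist_eq_norm, hqd]; congr 1; abel
  have hv : ∀ s t, ‖stdVertex m s - stdVertex m t‖ ≤ 2 := fun s t =>
    (norm_sub_le _ _).trans (by linarith [vertex_norm m s, vertex_norm m t])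
  rw [hd]
  refine (norm_add_le _ _).trans ?_
  rw [norm_smul, norm_smul, Real.norm_of_nonneg ha0, Real.norm_of_nonneg hb0]
  nlinarith [mul_le_mul_of_nonneg_left (hv l i) ha0, mul_le_mul_of_nonneg_left (hv l k) hb0]

lemma skel_one : simplexSkeleton 1 = ∅ := by
  ext x
  simp only [Set.mem_empty_iff_false, iff_false]
  rintro ⟨-, i, j, hij, hi, hj⟩
  rw [mem_hyper] at hi hj
  have := bary_sum 1 x
  rw [Fin.sum_univ_two] at this
  fin_cases i <;> fin_cases j <;> simp_all

theorem statement1 (m : ℕ) (hm : 0 < m) :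
    ∃ ε₀ : ℝ, 0 < ε₀ ∧ ∃ C₀ : ℝ, 0 < C₀ ∧
      ∀ (i : Fin (m + 1)) (p : EuclideanSpace ℝ (Fin m)), p ∈ stdSimplexSet m →
        Metric.infDist p (simplexHyperplane m i) < ε₀ →
        C₀ * Metric.infDist p (simplexHyperplane m i) < Metric.infDist p (simplexSkeleton m) →
        Metric.infDist p (frontier (stdSimplexSet m)) =
          Metric.infDist p (simplexHyperplane m i) := by
  have hm0 : (0 : ℝ) < m := by exact_mod_cast hm
  refine ⟨1, one_pos, 4 * m, by positivity, fun i p hp _ hC => ?_⟩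
  have hm2 : 2 ≤ m := by
    by_contra hlt
    have : m = 1 := by omega
    subst this
    rw [skel_one, infDist_empty] at hC
    have := infDist_nonneg (x := p) (s := simplexHyperplane 1 i)
    norm_num at hC
    linarith
  apply le_antisymm
  · rw [le_infDist (hyper_nonempty m hm i)]
    intro q hq
    exact frontier_between _ p q hp (hyper_not_interior m i q hq)
  · have hmin : ∀ k, infDist p (simplexHyperplane m i) ≤ infDist p (simplexHyperplane m k) := by
      intro k
      by_contra! hlt
      have hik : i ≠ k := by rintro rfl; exact lt_irrefl _ hlt
      have h1 := skel_le m hm2 i k hik p hp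
      have h2 := bary_le m hm i p
      have h3 := bary_le m hm k p
      have h4 := mul_lt_mul_of_pos_left hlt hm0
      linarith
    have hne : (frontier (stdSimplexSet m)).Nonempty := by
      obtain ⟨q, hq⟩ := hyper_nonempty m hm i
      have hv : stdVertex m i ∈ stdSimplexSet m := subset_convexHull ℝ _ ⟨i, rfl⟩
      have : Nontrivial (Fin (m + 1)) := Fin.nontrivial_iff_two_le.2 (by omega)
      obtain ⟨j, hj⟩ := exists_ne i
      exact ⟨_, subset_closure hv, hyper_not_interior m j _
        (by rw [mem_hyper, bary_vertex, if_neg hj])⟩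
    rw [le_infDist hne]
    intro x hx
    obtain ⟨k, hk⟩ := frontier_sub m x hx
    exact (hmin k).trans (infDist_le_dist_of_mem hk)
end

section
/- For every dimension d ≥ 1 and all real numbers ε > 0 and η > 0 there exists δ with 0 < δ < η, depending only on d, ε and η, such that for every μ ∈ (0, 1] there is a smooth diffeomorphism Ψ : ℝ^d → ℝ^d with the following properties: (1) Ψ(x) = μ·x for every x with |x| ≤ δ; (2) Ψ(x) = x for every x with |x| ≥ η; (3) Ψ is Lipschitz with Lipschitz constant at most 1 + ε. Moreover Ψ can be taken radial, of the form Ψ(x) = ψ(|x|)·x/|x| for an increasing smooth function ψ : [0,∞) → [0,∞). -/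
open Set Function

section Helpers

open Filter Topology

/-- The radial map with profile `f`. -/
noncomputable def radialMap {E : Type*} [NormedAddCommGroup E] [InnerProductSpace ℝ E]
    (f : ℝ → ℝ) (x : E) : E := (f ‖x‖ / ‖x‖) • x

variable {E : Type*} [NormedAddCommGroup E] [InnerProductSpace ℝ E]

lemma radialMap_linear (f : ℝ → ℝ) (c : ℝ) (x : E) (h : f ‖x‖ = c * ‖x‖) :
    radialMap f x = c • x := by
  unfold radialMap
  by_cases hx : x = 0
  · simp [hx]
  · rw [h, mul_div_cancel_right₀ _ (norm_ne_zero_iff.2 hx)]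

lemma norm_radialMap (f : ℝ → ℝ) (x : E) (hx : x ≠ 0) (h : 0 ≤ f ‖x‖) :
    ‖radialMap f x‖ = f ‖x‖ := by
  have h0 : ‖x‖ ≠ 0 := norm_ne_zero_iff.2 hx
  rw [radialMap, norm_smul, Real.norm_of_nonneg (by positivity), div_mul_cancel₀ _ h0]

lemma radialMap_leftInverse (f g : ℝ → ℝ) (hf : ∀ t, 0 < t → 0 < f t)
    (hgf : ∀ t, g (f t) = t) : LeftInverse (radialMap (E := E) g) (radialMap f) := by
  intro x
  by_cases hx : x = 0
  · simp [hx, radialMap]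
  have h0 : 0 < ‖x‖ := norm_pos_iff.2 hx
  have h1 := hf _ h0
  have h2 := norm_radialMap f x hx h1.le
  rw [radialMap, h2, hgf, radialMap, smul_smul]
  rw [show ‖x‖ / f ‖x‖ * (f ‖x‖ / ‖x‖) = 1 by field_simp, one_smul]

lemma radialMap_contDiff (f : ℝ → ℝ) (c r : ℝ) (hr : 0 < r) (hf : ContDiff ℝ (⊤ : ℕ∞) f)
    (h : ∀ t, 0 ≤ t → t ≤ r → f t = c * t) :
    ContDiff ℝ (⊤ : ℕ∞) (radialMap (E := E) f) := by
  rw [contDiff_iff_contDiffAt]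
  intro x
  by_cases hx : x = 0
  · subst hx
    have h1 : ContDiffAt ℝ (⊤ : ℕ∞) (fun x : E => c • x) 0 := by fun_prop
    refine h1.congr_of_eventuallyEq ?_
    filter_upwards [Metric.ball_mem_nhds (0 : E) hr] with y hy
    have hy' : ‖y‖ < r := by simpa using hy
    exact radialMap_linear f c y (h _ (norm_nonneg _) hy'.le)
  · have hn : ContDiffAt ℝ (⊤ : ℕ∞) (fun x : E => ‖x‖) x := contDiffAt_norm ℝ hx
    exact ((hf.contDiffAt.comp x hn).div hn (norm_ne_zero_iff.2 hx)).smul contDiffAt_id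

lemma radialMap_dist (f : ℝ → ℝ) (L : ℝ) (hL : 0 ≤ L) (hf0 : f 0 = 0)
    (hpos : ∀ t, 0 ≤ t → 0 ≤ f t) (hlip : ∀ s t, |f s - f t| ≤ L * |s - t|) (x y : E) :
    ‖radialMap f x - radialMap f y‖ ≤ L * ‖x - y‖ := by
  have hle : ∀ t, 0 ≤ t → f t ≤ L * t := by
    intro t ht
    have := hlip t 0
    rw [hf0, sub_zero, sub_zero, abs_of_nonneg ht] at this
    exact (le_abs_self _).trans this
  have hz : radialMap f (0 : E) = 0 := by simp [radialMap]
  by_cases hx : x = 0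
  · subst hx
    by_cases hy : y = 0
    · simp [hy, hz]
    rw [hz, zero_sub, zero_sub, norm_neg, norm_neg, norm_radialMap f y hy (hpos _ (norm_nonneg _))]
    exact hle _ (norm_nonneg _)
  by_cases hy : y = 0
  · subst hy
    rw [hz, sub_zero, sub_zero, norm_radialMap f x hx (hpos _ (norm_nonneg _))]
    exact hle _ (norm_nonneg _)
  have ha : 0 < ‖x‖ := norm_pos_iff.2 hx
  have hb : 0 < ‖y‖ := norm_pos_iff.2 hy
  have hi : inner ℝ x y ≤ ‖x‖ * ‖y‖ := real_inner_le_norm x y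
  have hp : 0 ≤ f ‖x‖ / ‖x‖ := div_nonneg (hpos _ ha.le) ha.le
  have hq : 0 ≤ f ‖y‖ / ‖y‖ := div_nonneg (hpos _ hb.le) hb.le
  have hpL : f ‖x‖ / ‖x‖ ≤ L := (div_le_iff₀ ha).2 (hle _ ha.le)
  have hqL : f ‖y‖ / ‖y‖ ≤ L := (div_le_iff₀ hb).2 (hle _ hb.le)
  have hl := hlip ‖x‖ ‖y‖
  refine le_of_sq_le_sq ?_ (by positivity)
  have e1 : ‖radialMap f x - radialMap f y‖ ^ 2 = (f ‖x‖ - f ‖y‖) ^ 2 +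
      2 * ((f ‖x‖ / ‖x‖) * (f ‖y‖ / ‖y‖)) * (‖x‖ * ‖y‖ - inner ℝ x y) := by
    rw [norm_sub_sq_real, norm_radialMap f x hx (hpos _ ha.le),
      norm_radialMap f y hy (hpos _ hb.le), radialMap, radialMap, real_inner_smul_left,
      real_inner_smul_right]
    field_simp
    ring
  have e2 : (L * ‖x - y‖) ^ 2 = (L * |‖x‖ - ‖y‖|) ^ 2 +
      2 * (L * L) * (‖x‖ * ‖y‖ - inner ℝ x y) := by
    rw [mul_pow, mul_pow, sq_abs, norm_sub_sq_real]; ring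
  rw [e1, e2, ← sq_abs (f ‖x‖ - f ‖y‖)]
  have h3 : (f ‖x‖ / ‖x‖) * (f ‖y‖ / ‖y‖) ≤ L * L := mul_le_mul hpL hqL hq hL
  have h4 : 0 ≤ ‖x‖ * ‖y‖ - inner ℝ x y := by linarith
  gcongr

lemma deriv_smoothTransition_bound :
    ∃ C : ℝ, 0 < C ∧ ∀ t, 0 ≤ deriv Real.smoothTransition t ∧
      deriv Real.smoothTransition t ≤ C := by
  have hc : Continuous (deriv Real.smoothTransition) :=
    (Real.smoothTransition.contDiff (n := 1)).continuous_deriv le_rfl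
  obtain ⟨C, hC⟩ := (isCompact_Icc (a := (0 : ℝ)) (b := 1)).exists_bound_of_continuousOn
    hc.continuousOn
  refine ⟨max C 1, by positivity, fun t => ⟨Real.smoothTransition.monotone.deriv_nonneg, ?_⟩⟩
  by_cases ht : t ∈ Icc (0 : ℝ) 1
  · exact (le_abs_self _).trans ((hC t ht).trans (le_max_left _ _))
  · have : deriv Real.smoothTransition t = 0 := by
      rcases lt_or_ge t 0 with h | h
      · have : Real.smoothTransition =ᶠ[𝓝 t] fun _ => 0 := by
          filter_upwards [Iio_mem_nhds h] with s hs
          exact Real.smoothTransition.zero_of_nonpos (le_of_lt hs)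
        rw [this.deriv_eq]; simp
      · have h1 : 1 < t := by
          by_contra h1
          exact ht ⟨h, not_lt.1 h1⟩
        have : Real.smoothTransition =ᶠ[𝓝 t] fun _ => 1 := by
          filter_upwards [Ioi_mem_nhds h1] with s hs
          exact Real.smoothTransition.one_of_one_le (le_of_lt hs)
        rw [this.deriv_eq]; simp
    rw [this]; positivity

/-- The radial profile. -/
noncomputable def profile (a δ μ t : ℝ) : ℝ :=
  t * (μ + (1 - μ) * Real.smoothTransition (a * (Real.log t - Real.log δ)))

lemma profile_small (a δ μ t : ℝ) (ha : 0 < a) (ht : |t| ≤ δ) :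
    profile a δ μ t = μ * t := by
  unfold profile
  by_cases h0 : t = 0
  · simp [h0]
  have h1 : Real.log t ≤ Real.log δ := by
    rw [← Real.log_abs]
    exact Real.log_le_log (abs_pos.2 h0) ht
  rw [Real.smoothTransition.zero_of_nonpos (mul_nonpos_of_nonneg_of_nonpos ha.le (by linarith))]
  ring

lemma profile_large (a δ η μ t : ℝ) (ha : 0 < a) (hη : 0 < η)
    (h : a * (Real.log η - Real.log δ) = 1) (ht : η ≤ |t|) :
    profile a δ μ t = t := by
  unfold profile
  have h1 : Real.log η ≤ Real.log t := by
    rw [← Real.log_abs t]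
    exact Real.log_le_log hη ht
  rw [Real.smoothTransition.one_of_one_le]
  · ring
  · rw [← h]; gcongr

lemma profile_contDiff (a δ μ : ℝ) (ha : 0 < a) (hδ : 0 < δ) :
    ContDiff ℝ (⊤ : ℕ∞) (profile a δ μ) := by
  rw [contDiff_iff_contDiffAt]
  intro t
  by_cases h0 : t = 0
  · subst h0
    have h1 : ContDiffAt ℝ (⊤ : ℕ∞) (fun x : ℝ => μ * x) 0 := by fun_prop
    refine h1.congr_of_eventuallyEq ?_
    filter_upwards [Metric.ball_mem_nhds (0 : ℝ) hδ] with y hy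
    have hy' : |y| < δ := by simpa using hy
    exact profile_small a δ μ y ha hy'.le
  · have hl : ContDiffAt ℝ (⊤ : ℕ∞) Real.log t := Real.contDiffAt_log.2 h0
    have h2 : ContDiffAt ℝ (⊤ : ℕ∞) (fun t => a * (Real.log t - Real.log δ)) t :=
      contDiffAt_const.mul (hl.sub contDiffAt_const)
    have h3 : ContDiffAt ℝ (⊤ : ℕ∞)
        (fun t => Real.smoothTransition (a * (Real.log t - Real.log δ))) t :=
      Real.smoothTransition.contDiffAt.comp t h2
    exact contDiffAt_id.mul (contDiffAt_const.add (contDiffAt_const.mul h3))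

lemma profile_deriv (a δ μ C t : ℝ) (ha : 0 < a) (hδ : 0 < δ) (hμ0 : 0 < μ) (hμ : μ ≤ 1)
    (hC0 : 0 < C) (hC : ∀ t, 0 ≤ deriv Real.smoothTransition t ∧
      deriv Real.smoothTransition t ≤ C) :
    μ ≤ deriv (profile a δ μ) t ∧ deriv (profile a δ μ) t ≤ 1 + a * C := by
  by_cases h0 : t = 0
  · subst h0
    have : profile a δ μ =ᶠ[𝓝 0] fun x => μ * x := by
      filter_upwards [Metric.ball_mem_nhds (0 : ℝ) hδ] with y hy
      have hy' : |y| < δ := by simpa using hy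
      exact profile_small a δ μ y ha hy'.le
    have h1 : deriv (profile a δ μ) 0 = μ := by
      rw [this.deriv_eq]
      simp
    rw [h1]
    exact ⟨le_rfl, by nlinarith [mul_pos ha hC0]⟩
  · set u := a * (Real.log t - Real.log δ) with hu
    have h1 : HasDerivAt (fun t => a * (Real.log t - Real.log δ)) (a * t⁻¹) t :=
      ((Real.hasDerivAt_log h0).sub_const _).const_mul a
    have h2 : HasDerivAt Real.smoothTransition (deriv Real.smoothTransition u) u :=
      ((Real.smoothTransition.contDiff (n := 1)).differentiable one_ne_zero u).hasDerivAt
    have h3 : HasDerivAt (fun t => Real.smoothTransition (a * (Real.log t - Real.log δ)))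
        (deriv Real.smoothTransition u * (a * t⁻¹)) t :=
      HasDerivAt.comp (h₂ := Real.smoothTransition) t h2 h1
    have h4 := (hasDerivAt_id t).mul ((h3.const_mul (1 - μ)).const_add μ)
    have h5 : HasDerivAt (profile a δ μ) _ t := h4
    have h6 : deriv (profile a δ μ) t =
        μ + (1 - μ) * Real.smoothTransition u + (1 - μ) * (a * deriv Real.smoothTransition u) := by
      rw [h5.deriv]
      simp only [id]
      rw [← hu]
      field_simp
    rw [h6]
    obtain ⟨hd0, hd1⟩ := hC u
    have hs0 := Real.smoothTransition.nonneg u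
    have hs1 := Real.smoothTransition.le_one u
    have hm : 0 ≤ 1 - μ := by linarith
    have k1 : 0 ≤ (1 - μ) * Real.smoothTransition u := by positivity
    have k2 : (1 - μ) * Real.smoothTransition u ≤ 1 - μ := mul_le_of_le_one_right hm hs1
    have k3 : 0 ≤ a * deriv Real.smoothTransition u := by positivity
    have k4 : a * deriv Real.smoothTransition u ≤ a * C := by gcongr
    have k5 : 0 ≤ (1 - μ) * (a * deriv Real.smoothTransition u) := by positivity
    have k6 : (1 - μ) * (a * deriv Real.smoothTransition u) ≤ a * deriv Real.smoothTransition u :=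
      mul_le_of_le_one_left k3 (by linarith)
    constructor <;> linarith

end Helpers

open Set Function

/-- For every dimension `d ≥ 1` and all `ε, η > 0` there is `0 < δ < η`, depending only on
`d`, `ε`, `η` (in particular, not on `μ`), such that for every `μ ∈ (0,1]` there is a smooth
diffeomorphism `Ψ` of `ℝ^d` with `Ψ(x) = μ x` for `|x| ≤ δ`, `Ψ(x) = x` for `|x| ≥ η`, and
`Lip(Ψ) ≤ 1 + ε`; moreover `Ψ` is radial, `Ψ(x) = ψ(|x|) x / |x|` for an increasing smooth
function `ψ : [0,∞) → [0,∞)`. -/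
theorem statement2 (d : ℕ) (hd : 1 ≤ d) (ε η : ℝ) (hε : 0 < ε) (hη : 0 < η) :
    ∃ δ : ℝ, 0 < δ ∧ δ < η ∧
      ∀ μ : ℝ, 0 < μ → μ ≤ 1 →
        ∃ (Ψ Φ : EuclideanSpace ℝ (Fin d) → EuclideanSpace ℝ (Fin d)) (ψ : ℝ → ℝ),
          ContDiff ℝ (⊤ : ℕ∞) Ψ ∧ ContDiff ℝ (⊤ : ℕ∞) Φ ∧
          Function.LeftInverse Φ Ψ ∧ Function.RightInverse Φ Ψ ∧
          (∀ x, ‖x‖ ≤ δ → Ψ x = μ • x) ∧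
          (∀ x, η ≤ ‖x‖ → Ψ x = x) ∧
          LipschitzWith (Real.toNNReal (1 + ε)) Ψ ∧
          StrictMonoOn ψ (Set.Ici (0 : ℝ)) ∧
          ContDiffOn ℝ (⊤ : ℕ∞) ψ (Set.Ici (0 : ℝ)) ∧
          (∀ t : ℝ, 0 ≤ t → 0 ≤ ψ t) ∧
          (∀ x, x ≠ 0 → Ψ x = (ψ ‖x‖ / ‖x‖) • x) := by
  obtain ⟨C, hC0, hC⟩ := deriv_smoothTransition_bound
  have ha : 0 < ε / C := by positivity
  set a := ε / C with ha_def
  have haC : a * C = ε := by rw [ha_def]; field_simp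
  have hδ : 0 < η * Real.exp (-(1 / a)) := by positivity
  have hδη : η * Real.exp (-(1 / a)) < η := by
    have : Real.exp (-(1 / a)) < 1 := by
      rw [Real.exp_lt_one_iff]
      have : 0 < 1 / a := by positivity
      linarith
    nlinarith
  have hlog : a * (Real.log η - Real.log (η * Real.exp (-(1 / a)))) = 1 := by
    rw [Real.log_mul hη.ne' (Real.exp_pos _).ne', Real.log_exp]
    field_simp
    ring
  refine ⟨_, hδ, hδη, ?_⟩
  set δ := η * Real.exp (-(1 / a)) with hδ_def
  intro μ hμ0 hμ1
  have hcd := profile_contDiff a δ μ ha hδ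
  have hder := fun t => profile_deriv a δ μ C t ha hδ hμ0 hμ1 hC0 hC
  have hlarge := fun t => profile_large a δ η μ t ha hη hlog
  have hsmall := fun t => profile_small a δ μ t ha
  set f := profile a δ μ with hf
  have hdiff : Differentiable ℝ f := hcd.differentiable (by simp)
  have hmono : StrictMono f := strictMono_of_deriv_pos fun t => hμ0.trans_le (hder t).1
  have hf0 : f 0 = 0 := by rw [hsmall 0 (by simpa using hδ.le)]; simp
  have hpos : ∀ t, 0 < t → 0 < f t := fun t ht => hf0 ▸ hmono ht
  have hnn : ∀ t, 0 ≤ t → 0 ≤ f t := fun t ht => hf0 ▸ hmono.monotone ht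
  have hsurj : Function.Surjective f := by
    refine hdiff.continuous.surjective ?_ ?_
    · refine Filter.tendsto_id.congr' ?_
      filter_upwards [Filter.eventually_ge_atTop η] with t ht
      exact (hlarge t (ht.trans (le_abs_self t))).symm
    · refine Filter.tendsto_id.congr' ?_
      filter_upwards [Filter.eventually_le_atBot (-η)] with t ht
      exact (hlarge t ((le_neg.1 ht).trans (neg_le_abs t))).symm
  let h : ℝ ≃ₜ ℝ := (hmono.orderIsoOfSurjective f hsurj).toHomeomorph
  have hh : ∀ t, h t = f t := fun t => rfl
  have hg : ContDiff ℝ (⊤ : ℕ∞) h.symm :=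
    h.contDiff_symm_deriv (f' := deriv f) (fun t => (hμ0.trans_le (hder t).1).ne')
      (fun t => (hdiff t).hasDerivAt) hcd
  have hgf : ∀ t, h.symm (f t) = t := fun t => h.symm_apply_apply t
  have hfg : ∀ t, f (h.symm t) = t := fun t => h.apply_symm_apply t
  have hgpos : ∀ t, 0 < t → 0 < h.symm t := by
    intro t ht
    rw [← hmono.lt_iff_lt, hf0, hfg]
    exact ht
  have hlip : ∀ s t, |f s - f t| ≤ (1 + ε) * |s - t| := by
    intro s t
    have := (convex_univ (𝕜 := ℝ) (E := ℝ)).norm_image_sub_le_of_norm_deriv_le (f := f)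
      (C := 1 + ε) (x := t) (y := s) (fun x _ => hdiff x) (fun x _ => ?_) (mem_univ _) (mem_univ _)
    · simpa [Real.norm_eq_abs] using this
    · have := hder x
      rw [haC] at this
      rw [Real.norm_eq_abs, abs_of_nonneg (by linarith)]
      exact this.2
  refine ⟨radialMap f, radialMap h.symm, f, ?_, ?_, ?_, ?_, ?_, ?_, ?_, ?_, ?_, ?_, ?_⟩
  · exact radialMap_contDiff f μ δ hδ hcd fun t ht0 ht => hsmall t (by rwa [abs_of_nonneg ht0])
  · refine radialMap_contDiff h.symm μ⁻¹ (μ * δ) (by positivity) hg fun t ht0 ht => ?_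
    have h1 : 0 ≤ μ⁻¹ * t := by positivity
    have h2 : μ⁻¹ * t ≤ δ := by rw [inv_mul_le_iff₀ hμ0]; exact ht
    apply hmono.injective
    rw [hfg, hsmall _ (by rwa [abs_of_nonneg h1])]
    field_simp
  · exact radialMap_leftInverse f h.symm hpos hgf
  · exact radialMap_leftInverse h.symm f hgpos hfg
  · intro x hx
    exact radialMap_linear f μ x (hsmall _ (by rwa [abs_norm]))
  · intro x hx
    rw [radialMap_linear f 1 x (by rw [hlarge _ (by rwa [abs_norm]), one_mul]), one_smul]
  · refine LipschitzWith.of_dist_le_mul fun x y => ?_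
    rw [dist_eq_norm, dist_eq_norm, Real.coe_toNNReal _ (by positivity)]
    exact radialMap_dist f (1 + ε) (by positivity) hf0 hnn hlip x y
  · exact hmono.strictMonoOn _
  · exact hcd.contDiffOn
  · exact hnn
  · intro x _
    rfl
end

section
/- Every finite polyhedron in ℝ^N admits a finite triangulation: if K ⊂ ℝ^N is the union of finitely many simplices (each being the convex hull of an affinely independent finite set of points), then there exists a finite simplicial complex in ℝ^N whose space equals K. -/
open Set Geometry

namespace PolyTri

/-- `x` lies in the closure of the sign cell of `y`. -/
def le {ι E : Type*} (f : ι → E → ℝ) (x y : E) : Prop :=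
  ∀ i, f i x = 0 ∨ SignType.sign (f i x) = SignType.sign (f i y)

theorem le_trans' {ι E : Type*} {f : ι → E → ℝ} {x y z : E} (h : le f x y) (h' : le f y z) :
    le f x z := by
  intro i
  rcases h i with h1 | h1
  · exact Or.inl h1
  · rcases h' i with h2 | h2
    · left
      rw [h2] at h1
      simpa using h1
    · exact Or.inr (h1.trans h2)

theorem exists_top {ι E : Type*} [Fintype ι] (f : ι → E → ℝ) (s : Finset E)
    (hs : s.Nonempty) (hc : ∀ p ∈ s, ∀ q ∈ s, le f p q ∨ le f q p) :
    ∃ p ∈ s, ∀ q ∈ s, le f q p := by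
  classical
  obtain ⟨p, hp, hmax⟩ := Finset.exists_max_image s
    (fun x => (Finset.univ.filter (fun i => f i x ≠ 0)).card) hs
  refine ⟨p, hp, fun q hq => ?_⟩
  rcases hc q hq p hp with h | h
  · exact h
  · have hsub : Finset.univ.filter (fun i => f i p ≠ 0) ⊆
        Finset.univ.filter (fun i => f i q ≠ 0) := by
      intro i hi
      simp only [Finset.mem_filter, Finset.mem_univ, true_and] at hi ⊢
      intro h0
      rcases h i with h1 | h1
      · exact hi h1
      · rw [h0] at h1
        exact hi (by simpa using h1)
    have heq := Finset.eq_of_subset_of_card_le hsub (hmax q hq)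
    intro i
    by_cases hi : f i q = 0
    · exact Or.inl hi
    · right
      have : i ∈ Finset.univ.filter (fun i => f i q ≠ 0) := by simpa using hi
      rw [← heq] at this
      simp only [Finset.mem_filter, Finset.mem_univ, true_and] at this
      rcases h i with h1 | h1
      · exact absurd h1 this
      · exact h1.symm

theorem sign_sum {ι E : Type*} (f : ι → E → ℝ) (V : Finset E) (a : E → ℝ)
    (ha : ∀ p ∈ V, 0 ≤ a p) (p : E) (hp : p ∈ V) (hap : a p ≠ 0)
    (htop : ∀ q ∈ V, a q ≠ 0 → le f q p) (i : ι) :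
    SignType.sign (∑ q ∈ V, a q * f i q) = SignType.sign (f i p) := by
  have hapos : 0 < a p := lt_of_le_of_ne (ha p hp) (Ne.symm hap)
  rcases lt_trichotomy (f i p) 0 with h | h | h
  · rw [sign_neg h]
    apply sign_neg
    apply Finset.sum_neg'
    · intro q hq
      by_cases h0 : a q = 0
      · simp [h0]
      · apply mul_nonpos_of_nonneg_of_nonpos (ha q hq)
        rcases htop q hq h0 i with h1 | h1
        · exact h1.le
        · rw [sign_neg h, sign_eq_neg_one_iff] at h1
          exact h1.le
    · exact ⟨p, hp, mul_neg_of_pos_of_neg hapos h⟩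
  · rw [h, sign_zero, Finset.sum_eq_zero, sign_zero]
    intro q hq
    by_cases h0 : a q = 0
    · simp [h0]
    · rcases htop q hq h0 i with h1 | h1
      · simp [h1]
      · rw [h, sign_zero, sign_eq_zero_iff] at h1
        simp [h1]
  · rw [sign_pos h]
    apply sign_pos
    apply Finset.sum_pos'
    · intro q hq
      by_cases h0 : a q = 0
      · simp [h0]
      · apply mul_nonneg (ha q hq)
        rcases htop q hq h0 i with h1 | h1
        · exact h1.ge
        · rw [sign_pos h, sign_eq_one_iff] at h1
          exact h1.le
    · exact ⟨p, hp, mul_pos hapos h⟩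

theorem exists_sign {ι E : Type*} [Fintype ι] (f : ι → E → ℝ) (V : Finset E) (a : E → ℝ)
    (ha : ∀ p ∈ V, 0 ≤ a p) (hne : ∃ p ∈ V, a p ≠ 0)
    (hc : ∀ p ∈ V, ∀ q ∈ V, a p ≠ 0 → a q ≠ 0 → le f p q ∨ le f q p) :
    ∃ p ∈ V, a p ≠ 0 ∧
      ∀ i, SignType.sign (∑ q ∈ V, a q * f i q) = SignType.sign (f i p) := by
  classical
  obtain ⟨p, hp, htop⟩ := exists_top f (V.filter (fun p => a p ≠ 0))
    (by obtain ⟨p, h1, h2⟩ := hne; exact ⟨p, by simp [h1, h2]⟩)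
    (by
      intro p hp q hq
      rw [Finset.mem_filter] at hp hq
      exact hc p hp.1 q hq.1 hp.2 hq.2)
  rw [Finset.mem_filter] at hp
  refine ⟨p, hp.1, hp.2, sign_sum f V a ha p hp.1 hp.2 ?_⟩
  intro q hq hq0
  exact htop q (by simp [hq, hq0])

theorem unique_aux {ι E : Type*} [Fintype ι] (f : ι → E → ℝ) (V : Finset E)
    (hV : ∀ p ∈ V, ∀ q ∈ V, (∀ i, SignType.sign (f i p) = SignType.sign (f i q)) → p = q)
    (n : ℕ) : ∀ (a b : E → ℝ), (V.filter (fun p => a p ≠ 0)).card +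
      (V.filter (fun p => b p ≠ 0)).card ≤ n →
    (∀ p ∈ V, 0 ≤ a p) → (∀ p ∈ V, 0 ≤ b p) →
    (∀ p ∈ V, ∀ q ∈ V, a p ≠ 0 → a q ≠ 0 → le f p q ∨ le f q p) →
    (∀ p ∈ V, ∀ q ∈ V, b p ≠ 0 → b q ≠ 0 → le f p q ∨ le f q p) →
    ∑ p ∈ V, a p = ∑ p ∈ V, b p →
    (∀ i, ∑ p ∈ V, a p * f i p = ∑ p ∈ V, b p * f i p) → ∀ p ∈ V, a p = b p := by
  classical
  induction n with
  | zero =>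
    intro a b hn _ _ _ _ _ _ p hp
    have h1 : (V.filter (fun p => a p ≠ 0)) = ∅ := by
      rw [← Finset.card_eq_zero]; omega
    have h2 : (V.filter (fun p => b p ≠ 0)) = ∅ := by
      rw [← Finset.card_eq_zero]; omega
    rw [Finset.filter_eq_empty_iff] at h1 h2
    have h1 := h1 hp
    have h2 := h2 hp
    push Not at h1 h2
    rw [h1, h2]
  | succ n ih =>
    intro a b hn ha hb hac hbc hsum hf
    by_cases hae : ∃ p ∈ V, a p ≠ 0
    · by_cases hbe : ∃ p ∈ V, b p ≠ 0
      · obtain ⟨p, hp, hap, hps⟩ := exists_sign f V a ha hae hac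
        obtain ⟨q, hq, hbq, hqs⟩ := exists_sign f V b hb hbe hbc
        have hpq : p = q := hV p hp q hq (fun i => by rw [← hps, ← hqs, hf])
        subst hpq
        have hapos : 0 < a p := lt_of_le_of_ne (ha p hp) (Ne.symm hap)
        have hbpos : 0 < b p := lt_of_le_of_ne (hb p hp) (Ne.symm hbq)
        set m := min (a p) (b p) with hm
        have hmpos : 0 < m := lt_min hapos hbpos
        have hma : m ≤ a p := min_le_left _ _
        have hmb : m ≤ b p := min_le_right _ _
        have hsa : ∀ (c : E → ℝ), c p ≠ 0 → ∀ q, c q - (if q = p then m else 0) ≠ 0 → c q ≠ 0 := by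
          intro c hc q h
          by_cases hqp : q = p
          · rw [hqp]; exact hc
          · simpa [hqp] using h
        have hsub : ∀ (c : E → ℝ), c p ≠ 0 →
            (V.filter (fun q => c q - (if q = p then m else 0) ≠ 0)) ⊆
            V.filter (fun q => c q ≠ 0) := by
          intro c hc q hq
          rw [Finset.mem_filter] at hq ⊢
          exact ⟨hq.1, hsa c hc q hq.2⟩
        have hlt : ∀ (c : E → ℝ), c p ≠ 0 → c p = m →
            (V.filter (fun q => c q - (if q = p then m else 0) ≠ 0)).card <
            (V.filter (fun q => c q ≠ 0)).card := by
          intro c hc hcm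
          apply Finset.card_lt_card
          refine ⟨hsub c hc, fun h => ?_⟩
          have := h (show p ∈ V.filter (fun q => c q ≠ 0) by simp [hp, hc])
          simp [hcm] at this
        have key := ih (fun q => a q - (if q = p then m else 0))
          (fun q => b q - (if q = p then m else 0)) ?_ ?_ ?_ ?_ ?_ ?_ ?_
        · intro q hq
          have := key q hq
          simpa using this
        · have h1 := Finset.card_le_card (hsub a hap)
          have h2 := Finset.card_le_card (hsub b hbq)
          rcases min_choice (a p) (b p) with h | h
          · have h3 := hlt a hap (by rw [hm, h])
            omega
          · have h3 := hlt b hbq (by rw [hm, h])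
            omega
        · intro q hq
          by_cases hqp : q = p
          · simp [hqp, hma]
          · simp [hqp, ha q hq]
        · intro q hq
          by_cases hqp : q = p
          · simp [hqp, hmb]
          · simp [hqp, hb q hq]
        · intro q hq r hr h1 h2
          exact hac q hq r hr (hsa a hap q h1) (hsa a hap r h2)
        · intro q hq r hr h1 h2
          exact hbc q hq r hr (hsa b hbq q h1) (hsa b hbq r h2)
        · simp only [Finset.sum_sub_distrib, hsum]
        · intro i
          simp only [sub_mul, Finset.sum_sub_distrib, hf]
      · push Not at hbe
        rw [Finset.sum_eq_zero hbe, Finset.sum_eq_zero_iff_of_nonneg ha] at hsum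
        intro p hp
        rw [hsum p hp, hbe p hp]
    · push Not at hae
      rw [Finset.sum_eq_zero hae, eq_comm, Finset.sum_eq_zero_iff_of_nonneg hb] at hsum
      intro p hp
      rw [hsum p hp, hae p hp]

theorem affine_sum {E : Type*} [AddCommGroup E] [Module ℝ E] (g : E →ᵃ[ℝ] ℝ) (V : Finset E)
    (a : E → ℝ) : ∑ p ∈ V, a p * g p = g.linear (∑ p ∈ V, a p • p) + (∑ p ∈ V, a p) * g 0 := by
  have h : ∀ p, g p = g.linear p + g 0 := fun p => congrFun (AffineMap.decomp g) p
  simp only [map_sum, map_smul, smul_eq_mul, Finset.sum_mul, ← Finset.sum_add_distrib]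
  refine Finset.sum_congr rfl (fun p _ => ?_)
  rw [h p]; ring

theorem unique {ι E : Type*} [Fintype ι] [AddCommGroup E] [Module ℝ E] (f : ι → E →ᵃ[ℝ] ℝ)
    (V : Finset E)
    (hV : ∀ p ∈ V, ∀ q ∈ V, (∀ i, SignType.sign (f i p) = SignType.sign (f i q)) → p = q)
    (a b : E → ℝ)
    (ha : ∀ p ∈ V, 0 ≤ a p) (hb : ∀ p ∈ V, 0 ≤ b p)
    (hac : ∀ p ∈ V, ∀ q ∈ V, a p ≠ 0 → a q ≠ 0 →
      le (fun i x => f i x) p q ∨ le (fun i x => f i x) q p)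
    (hbc : ∀ p ∈ V, ∀ q ∈ V, b p ≠ 0 → b q ≠ 0 →
      le (fun i x => f i x) p q ∨ le (fun i x => f i x) q p)
    (h1 : ∑ p ∈ V, a p = ∑ p ∈ V, b p)
    (h2 : ∑ p ∈ V, a p • p = ∑ p ∈ V, b p • p) : ∀ p ∈ V, a p = b p := by
  refine unique_aux (fun i x => f i x) V hV _ a b le_rfl ha hb hac hbc h1 ?_
  intro i
  rw [affine_sum, affine_sum, h1, h2]

/-- weights extended by zero -/
theorem mem_hull {E : Type*} [AddCommGroup E] [Module ℝ E] {s V : Finset E} (hsV : s ⊆ V) {x : E}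
    (hx : x ∈ convexHull ℝ (s : Set E)) :
    ∃ a : E → ℝ, (∀ p, 0 ≤ a p) ∧ (∀ p, a p ≠ 0 → p ∈ s) ∧ ∑ p ∈ V, a p = 1 ∧
      ∑ p ∈ V, a p • p = x := by
  classical
  rw [Finset.mem_convexHull'] at hx
  obtain ⟨w, hw, hw1, hwx⟩ := hx
  refine ⟨fun p => if p ∈ s then w p else 0, ?_, ?_, ?_, ?_⟩
  · intro p
    by_cases h : p ∈ s
    · simp [h, hw p h]
    · simp [h]
  · intro p h
    by_contra h'
    simp [h'] at h
  · rw [← hw1, ← Finset.sum_subset hsV]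
    · exact Finset.sum_congr rfl (fun p hp => by simp [hp])
    · intro p _ hp; simp [hp]
  · rw [← hwx, ← Finset.sum_subset hsV]
    · exact Finset.sum_congr rfl (fun p hp => by simp [hp])
    · intro p _ hp; simp [hp]

theorem cover {ι E : Type*} [Fintype ι] [NormedAddCommGroup E] [NormedSpace ℝ E]
    (f : ι → E →ᵃ[ℝ] ℝ) (K : Set E) (hb : Bornology.IsBounded K)
    (hK : ∀ x ∈ K, ∀ y, le (fun i x => f i x) y x → y ∈ K)
    (V : Finset E)
    (hrep : ∀ x ∈ K, ∃ p ∈ V, ∀ i, SignType.sign (f i p) = SignType.sign (f i x)) (n : ℕ) :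
    ∀ x ∈ K, (Finset.univ.filter (fun i => f i x ≠ 0)).card ≤ n →
    ∃ s : Finset E, s ⊆ V ∧ (∀ p ∈ s, ∀ q ∈ s,
      le (fun i x => f i x) p q ∨ le (fun i x => f i x) q p) ∧
      (∀ p ∈ s, le (fun i x => f i x) p x) ∧ x ∈ convexHull ℝ (s : Set E) := by
  classical
  induction n using Nat.strong_induction_on with
  | _ n ih =>
  intro x hx hn
  obtain ⟨p, hpV, hp⟩ := hrep x hx
  by_cases hxp : x = p
  · subst hxp
    refine ⟨{x}, by simpa using hpV, ?_, ?_, by simp⟩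
    · intro p hp q hq
      rw [Finset.mem_singleton] at hp hq
      subst hp; subst hq
      exact Or.inl (fun i => Or.inr rfl)
    · intro p hp
      rw [Finset.mem_singleton] at hp
      subst hp
      exact (fun i => Or.inr rfl)
  have hray : ∀ (t : ℝ) i, f i (x + t • (x - p)) = f i x + t * (f i x - f i p) := by
    intro t i
    have h : ∀ p, f i p = (f i).linear p + f i 0 := fun p => congrFun (AffineMap.decomp (f i)) p
    rw [h (x + _), h x, h p]
    simp only [map_add, map_smul, map_sub, smul_eq_mul]
    ring
  -- indices at which the ray crosses zero
  let S : Finset ι := Finset.univ.filter (fun i => f i x * (f i x - f i p) < 0)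
  have hS : S.Nonempty := by
    by_contra hS
    rw [Finset.not_nonempty_iff_eq_empty, Finset.filter_eq_empty_iff] at hS
    have hin : ∀ t : ℝ, 0 ≤ t → x + t • (x - p) ∈ K := by
      intro t ht
      refine hK x hx _ (fun i => Or.inr ?_)
      simp only [hray]
      have hSi := hS (Finset.mem_univ i)
      push Not at hSi
      have hpi := hp i
      rcases lt_trichotomy (f i x) 0 with h | h | h
      · rw [sign_neg h]
        apply sign_neg
        have : f i x - f i p ≤ 0 := by
          by_contra h'
          push Not at h'
          nlinarith
        nlinarith
      · rw [h, sign_zero, sign_eq_zero_iff] at hpi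
        rw [h, hpi]; simp
      · rw [sign_pos h]
        apply sign_pos
        have : 0 ≤ f i x - f i p := by
          by_contra h'
          push Not at h'
          nlinarith
        nlinarith [mul_nonneg ht this]
    obtain ⟨C, hC⟩ := hb.exists_norm_le
    have hpos : 0 < ‖x - p‖ := norm_pos_iff.2 (sub_ne_zero.2 hxp)
    have hC0 : 0 ≤ C := (norm_nonneg x).trans (hC x hx)
    have ht : 0 ≤ (2 * C + 1) / ‖x - p‖ := by positivity
    have h1 := hC _ (hin _ ht)
    have h2 := hC x hx
    have h3 : ‖((2 * C + 1) / ‖x - p‖) • (x - p)‖ = 2 * C + 1 := by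
      rw [norm_smul, Real.norm_of_nonneg ht]
      field_simp
    have h4 : ‖((2 * C + 1) / ‖x - p‖) • (x - p)‖ ≤
        ‖x + ((2 * C + 1) / ‖x - p‖) • (x - p)‖ + ‖x‖ := by
      have := norm_sub_le (x + ((2 * C + 1) / ‖x - p‖) • (x - p)) x
      simpa using this
    linarith
  obtain ⟨j, hj, hmin⟩ := Finset.exists_min_image S (fun i => f i x / (f i p - f i x)) hS
  set t := f j x / (f j p - f j x) with ht
  have hjS : f j x * (f j x - f j p) < 0 := (Finset.mem_filter.1 hj).2
  have hjd : f j p - f j x ≠ 0 := by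
    intro h
    have : f j x - f j p = 0 := by linarith
    rw [this] at hjS
    simp at hjS
  have hjx : f j x ≠ 0 := by
    intro h
    rw [h] at hjS
    simp at hjS
  have htpos : 0 < t := by
    have : t = (f j x * (f j p - f j x)) / (f j p - f j x) ^ 2 := by
      rw [ht]; field_simp
    rw [this]
    apply div_pos
    · nlinarith
    · positivity
  set y := x + t • (x - p) with hy
  have hyj : f j y = 0 := by
    rw [hy, hray, ht]
    field_simp
    ring
  have hyx : le (fun i x => f i x) y x := by
    intro i
    simp only [hy, hray]
    have hpi := hp i
    rcases lt_trichotomy (f i x) 0 with h | h | h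
    · by_cases hi : f i x - f i p ≤ 0
      · right
        rw [sign_neg h]
        apply sign_neg
        nlinarith
      · push Not at hi
        have hmi := hmin i (by simp only [S, Finset.mem_filter, Finset.mem_univ, true_and]; nlinarith)
        rw [← neg_div_neg_eq, le_div_iff₀ (by linarith)] at hmi
        have : f i x + t * (f i x - f i p) ≤ 0 := by linarith
        rcases this.lt_or_eq with h' | h'
        · right
          rw [sign_neg h, sign_neg h']
        · exact Or.inl h'
    · left
      rw [h, sign_zero, sign_eq_zero_iff] at hpi
      rw [h, hpi]; simp
    · by_cases hi : 0 ≤ f i x - f i p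
      · right
        rw [sign_pos h]
        apply sign_pos
        nlinarith [mul_nonneg htpos.le hi]
      · push Not at hi
        have hmi := hmin i (by simp only [S, Finset.mem_filter, Finset.mem_univ, true_and]; nlinarith)
        rw [le_div_iff₀ (by linarith)] at hmi
        have : 0 ≤ f i x + t * (f i x - f i p) := by linarith
        rcases this.lt_or_eq with h' | h'
        · right
          rw [sign_pos h, sign_pos h']
        · exact Or.inl h'.symm
  have hyK := hK x hx y hyx
  have hlt : (Finset.univ.filter (fun i => f i y ≠ 0)).card <
      (Finset.univ.filter (fun i => f i x ≠ 0)).card := by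
    apply Finset.card_lt_card
    refine ⟨?_, fun h => ?_⟩
    · intro i hi
      simp only [Finset.mem_filter, Finset.mem_univ, true_and] at hi ⊢
      intro h0
      rcases hyx i with h1 | h1
      · exact hi h1
      · simp only [h0] at h1
        exact hi (by simpa using h1)
    · have := h (show j ∈ Finset.univ.filter (fun i => f i x ≠ 0) by simp [hjx])
      simp [hyj] at this
  obtain ⟨s, hsV, hsc, hsy, hys⟩ := ih _ (lt_of_lt_of_le hlt hn) y hyK le_rfl
  have hpx : le (fun i x => f i x) p x := fun i => Or.inr (hp i)
  have hxp' : le (fun i x => f i x) x p := fun i => Or.inr (hp i).symm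
  refine ⟨insert p s, ?_, ?_, ?_, ?_⟩
  · intro q hq
    rw [Finset.mem_insert] at hq
    rcases hq with rfl | hq
    · exact hpV
    · exact hsV hq
  · have hsp : ∀ q ∈ s, le (fun i x => f i x) q p := fun q hq =>
      le_trans' (le_trans' (hsy q hq) hyx) hxp'
    intro q hq r hr
    rw [Finset.mem_insert] at hq hr
    rcases hq with rfl | hq
    · rcases hr with rfl | hr
      · exact Or.inl (fun i => Or.inr rfl)
      · exact Or.inr (hsp r hr)
    · rcases hr with rfl | hr
      · exact Or.inl (hsp q hq)
      · exact hsc q hq r hr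
  · intro q hq
    rw [Finset.mem_insert] at hq
    rcases hq with rfl | hq
    · exact hpx
    · exact le_trans' (hsy q hq) hyx
  · have hc := convex_convexHull ℝ ((insert p s : Finset E) : Set E)
    have h1 : p ∈ convexHull ℝ ((insert p s : Finset E) : Set E) :=
      subset_convexHull ℝ _ (by simp)
    have h2 : y ∈ convexHull ℝ ((insert p s : Finset E) : Set E) :=
      convexHull_mono (by simp) hys
    have h3 := hc h1 h2 (a := t / (1 + t)) (b := 1 / (1 + t)) (by positivity) (by positivity)
      (by field_simp; ring)
    convert h3 using 1
    have h4 : (1 + t) ≠ 0 := by positivity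
    have h5 : (t / (1 + t)) • p + (1 / (1 + t)) • y = ((1 + t) / (1 + t)) • x := by
      rw [hy]
      module
    rw [h5, div_self h4, one_smul]

theorem main {ι E : Type*} [Fintype ι] [NormedAddCommGroup E] [NormedSpace ℝ E]
    (f : ι → E →ᵃ[ℝ] ℝ) (K : Set E) (hb : Bornology.IsBounded K)
    (hK : ∀ x ∈ K, ∀ y, le (fun i x => f i x) y x → y ∈ K) :
    ∃ C : SimplicialComplex ℝ E, C.faces.Finite ∧ C.space = K := by
  classical
  let sg : E → ι → SignType := fun x i => SignType.sign (f i x)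
  obtain ⟨U, hUK, hUbij⟩ := Set.SurjOn.exists_bijOn_subset (Set.surjOn_image sg K)
  have hUfin : U.Finite := Set.Finite.of_finite_image (Set.toFinite _) hUbij.injOn
  let V : Finset E := hUfin.toFinset
  have hmV : ∀ p, p ∈ V ↔ p ∈ U := fun p => hUfin.mem_toFinset
  have hV : ∀ p ∈ V, ∀ q ∈ V, (∀ i, SignType.sign (f i p) = SignType.sign (f i q)) → p = q :=
    fun p hp q hq h => hUbij.injOn ((hmV p).1 hp) ((hmV q).1 hq) (funext h)
  have hrep : ∀ x ∈ K, ∃ p ∈ V, ∀ i, SignType.sign (f i p) = SignType.sign (f i x) := by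
    intro x hx
    obtain ⟨p, hp, h⟩ := hUbij.surjOn (Set.mem_image_of_mem sg hx)
    exact ⟨p, (hmV p).2 hp, fun i => congrFun h i⟩
  let F : Set (Finset E) := {s | s ⊆ V ∧ ∀ p ∈ s, ∀ q ∈ s,
      le (fun i x => f i x) p q ∨ le (fun i x => f i x) q p}
  have hFfin : F.Finite :=
    Set.Finite.subset (Finset.finite_toSet V.powerset) (fun s hs => by simpa using hs.1)
  have hindep : ∀ s ∈ F, AffineIndependent ℝ ((↑) : s → E) := by
    intro s hs
    rw [affineIndependent_iff]
    intro u w hw1 hw2 e he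
    let w' : E → ℝ := fun x => if h : x ∈ s then (if (⟨x, h⟩ : s) ∈ u then w ⟨x, h⟩ else 0) else 0
    have hw's : ∀ x, w' x ≠ 0 → x ∈ s := by
      intro x hx
      by_contra h
      simp [w', h] at hx
    have hw'e : ∀ e : s, w' e = if e ∈ u then w e else 0 := by
      intro e
      simp [w']
    have hs1 : ∑ x ∈ V, w' x = 0 := by
      rw [← Finset.sum_subset hs.1 (fun x _ hx => by by_contra h; exact hx (hw's x h)),
        ← Finset.sum_coe_sort s w']
      simp only [hw'e]
      rw [Finset.sum_ite_mem, Finset.univ_inter, hw1]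
    have hs2 : ∑ x ∈ V, w' x • x = 0 := by
      rw [← Finset.sum_subset hs.1 (fun x _ hx => by
          have : w' x = 0 := by by_contra h; exact hx (hw's x h)
          simp [this]),
        ← Finset.sum_coe_sort s (fun x => w' x • x)]
      simp only [hw'e, ite_smul, zero_smul]
      rw [Finset.sum_ite_mem, Finset.univ_inter, hw2]
    have hpm : ∀ x, max (w' x) 0 - max (-w' x) 0 = w' x := by
      intro x
      rcases le_total (w' x) 0 with h | h
      · rw [max_eq_right h, max_eq_left (by linarith)]; ring
      · rw [max_eq_left h, max_eq_right (by linarith)]; ring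
    have key := unique f V hV (fun x => max (w' x) 0) (fun x => max (-w' x) 0)
      (fun _ _ => le_max_right _ _) (fun _ _ => le_max_right _ _)
      (by
        intro p _ q _ h1 h2
        exact hs.2 p (hw's p (fun h => h1 (by simp [h]))) q (hw's q (fun h => h2 (by simp [h]))))
      (by
        intro p _ q _ h1 h2
        exact hs.2 p (hw's p (fun h => h1 (by simp [h]))) q (hw's q (fun h => h2 (by simp [h]))))
      (by rw [← sub_eq_zero, ← Finset.sum_sub_distrib]; simp only [hpm, hs1])
      (by
        rw [← sub_eq_zero, ← Finset.sum_sub_distrib]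
        simp only [← sub_smul, hpm, hs2])
    have h0 : w' e = 0 := by
      rw [← hpm, sub_eq_zero]
      exact key e (hs.1 e.2)
    rw [hw'e, if_pos he] at h0
    exact h0
  have hlow : IsLowerSet F := by
    intro s t hts hs
    exact ⟨hts.trans hs.1, fun p hp q hq => hs.2 p (hts hp) q (hts hq)⟩
  have hinter : ∀ᵉ (s ∈ F) (t ∈ F),
      convexHull ℝ ↑s ∩ convexHull ℝ ↑t ⊆ convexHull ℝ (s ∩ t : Set E) := by
    rintro s hs t ht x ⟨hxs, hxt⟩
    obtain ⟨a, ha0, has, ha1, hax⟩ := mem_hull hs.1 hxs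
    obtain ⟨b, hb0, hbt, hb1, hbx⟩ := mem_hull ht.1 hxt
    have key := unique f V hV a b (fun p _ => ha0 p) (fun p _ => hb0 p)
      (fun p _ q _ h1 h2 => hs.2 p (has p h1) q (has q h2))
      (fun p _ q _ h1 h2 => ht.2 p (hbt p h1) q (hbt q h2))
      (ha1.trans hb1.symm) (hax.trans hbx.symm)
    have hst : s ∩ t ⊆ V := Finset.inter_subset_left.trans hs.1
    have hz : ∀ p ∈ V, p ∉ s ∩ t → a p = 0 := by
      intro p hp hpn
      by_contra h
      exact hpn (Finset.mem_inter.2 ⟨has p h, hbt p (by rw [← key p hp]; exact h)⟩)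
    rw [← Finset.coe_inter, Finset.mem_convexHull']
    refine ⟨a, fun p _ => ha0 p, ?_, ?_⟩
    · rw [← ha1]
      exact Finset.sum_subset hst hz
    · rw [← hax]
      exact Finset.sum_subset hst (fun p hp hpn => by simp [hz p hp hpn])
  refine ⟨SimplicialComplex.ofErase F hindep hlow hinter, ?_, ?_⟩
  · rw [SimplicialComplex.ofErase_faces]
    exact hFfin.subset Set.sdiff_subset
  · ext x
    rw [SimplicialComplex.mem_space_iff, SimplicialComplex.ofErase_faces]
    constructor
    · rintro ⟨s, ⟨hs, -⟩, hx⟩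
      obtain ⟨a, ha0, has, ha1, hax⟩ := mem_hull hs.1 hx
      have hne : ∃ p ∈ V, a p ≠ 0 := by
        by_contra! h
        rw [Finset.sum_eq_zero h] at ha1
        exact zero_ne_one ha1
      obtain ⟨p, hp, _, hps⟩ := exists_sign (fun i x => f i x) V a (fun p _ => ha0 p) hne
        (fun p _ q _ h1 h2 => hs.2 p (has p h1) q (has q h2))
      refine hK p (hUK ((hmV p).1 hp)) x (fun i => Or.inr ?_)
      rw [← hps i]
      simp only
      rw [affine_sum, hax, ha1, one_mul]
      congr 1
      exact congrFun (AffineMap.decomp (f i)) x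
    · intro hx
      obtain ⟨s, hsV, hsc, _, hxs⟩ := cover f K hb hK V hrep _ x hx le_rfl
      refine ⟨s, ⟨⟨hsV, hsc⟩, ?_⟩, hxs⟩
      rintro rfl
      simp at hxs

theorem simplex_eq {E : Type*} [AddCommGroup E] [Module ℝ E] [FiniteDimensional ℝ E]
    (s : Finset E) (h : AffineIndependent ℝ ((↑) : s → E)) :
    ∃ (n : ℕ) (g : Fin n → E →ᵃ[ℝ] ℝ), ∀ x ∈ convexHull ℝ (s : Set E),
      ∀ y, le (fun i x => g i x) y x → y ∈ convexHull ℝ (s : Set E) := by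
  classical
  obtain ⟨t, hst, htind, htspan⟩ :=
    exists_subset_affineIndependent_affineSpan_eq_top (k := ℝ) (s := (s : Set E)) h
  obtain ⟨B, hB⟩ : ∃ B : AffineBasis t ℝ E, ∀ i, B i = (i : E) :=
    ⟨⟨(↑), htind, by simpa using htspan⟩, fun _ => rfl⟩
  have : Finite t := B.finite
  have : Fintype t := Fintype.ofFinite t
  let e := (Fintype.equivFin t).symm
  refine ⟨Fintype.card t, fun i => B.coord (e i), ?_⟩
  intro x hx y hyx
  have hyx' : ∀ i, B.coord i y = 0 ∨
      SignType.sign (B.coord i y) = SignType.sign (B.coord i x) := by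
    intro i
    have := hyx (e.symm i)
    simpa using this
  -- coordinates of x
  have hx0 : ∀ i : t, 0 ≤ B.coord i x := by
    have : x ∈ convexHull ℝ (Set.range B) := by
      refine convexHull_mono ?_ hx
      intro z hz
      exact ⟨⟨z, hst hz⟩, hB _⟩
    rw [B.convexHull_eq_nonneg_coord] at this
    exact this
  have hxz : ∀ i : t, (i : E) ∉ s → B.coord i x = 0 := by
    intro i hi
    have hsub : convexHull ℝ (s : Set E) ⊆ (B.coord i) ⁻¹' {0} := by
      apply convexHull_min
      · intro z hz
        have hne : i ≠ ⟨z, hst hz⟩ := by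
          rintro rfl
          exact hi hz
        have h0 := B.coord_apply_ne hne
        rw [hB] at h0
        simpa using h0
      · exact (convex_singleton (0 : ℝ)).affine_preimage (B.coord i)
    exact hsub hx
  have hy0 : ∀ i : t, 0 ≤ B.coord i y := by
    intro i
    rcases hyx' i with h | h
    · exact h.ge
    · rw [← sign_nonneg_iff, h, sign_nonneg_iff]
      exact hx0 i
  have hyz : ∀ i : t, (i : E) ∉ s → B.coord i y = 0 := by
    intro i hi
    rcases hyx' i with h | h
    · exact h
    · rwa [hxz i hi, sign_zero, sign_eq_zero_iff] at h
  have hsum : ∑ i, B.coord i y = 1 := B.sum_coord_apply_eq_one y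
  have hlin : ∑ i, B.coord i y • (i : E) = y := by
    simpa only [hB] using B.linear_combination_coord_eq_self y
  have hs' : ∑ i ∈ Finset.univ.filter (fun i : t => (i : E) ∈ s), B.coord i y = 1 := by
    rw [← hsum]
    refine Finset.sum_subset (Finset.subset_univ _) (fun i _ hi => hyz i (by simpa using hi))
  have hl' : ∑ i ∈ Finset.univ.filter (fun i : t => (i : E) ∈ s), B.coord i y • (i : E) = y := by
    conv_rhs => rw [← hlin]
    refine Finset.sum_subset (Finset.subset_univ _)
      (fun i _ hi => by rw [hyz i (by simpa using hi), zero_smul])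
  rw [← hl']
  refine (convex_convexHull ℝ _).sum_mem (fun i _ => hy0 i) hs' (fun i hi => ?_)
  exact subset_convexHull ℝ _ (by simpa using hi)

end PolyTri

/-- Every finite polyhedron in `ℝ^N` — a union of finitely many simplices, each the convex hull
of an affinely independent finite set — is the space of some finite simplicial complex. -/
theorem statement4 (N k : ℕ) (s : Fin k → Finset (EuclideanSpace ℝ (Fin N)))
    (hind : ∀ i, AffineIndependent ℝ ((↑) : ↥(s i) → EuclideanSpace ℝ (Fin N))) :
    ∃ K : SimplicialComplex ℝ (EuclideanSpace ℝ (Fin N)),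
      K.faces.Finite ∧
      K.space = ⋃ i, convexHull ℝ (s i : Set (EuclideanSpace ℝ (Fin N))) := by
  choose n g hg using fun i => PolyTri.simplex_eq (s i) (hind i)
  refine PolyTri.main (ι := Σ i, Fin (n i)) (fun j => g j.1 j.2) _ ?_ ?_
  · rw [Bornology.isBounded_iUnion]
    intro i
    rw [isBounded_convexHull]
    exact (s i).finite_toSet.isBounded
  · intro x hx y hyx
    rw [Set.mem_iUnion] at hx ⊢
    obtain ⟨i, hi⟩ := hx
    exact ⟨i, hg i x hi y (fun j => hyx ⟨i, j⟩)⟩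
end

section
/- Every compact convex polytope admits a triangulation: for every finite set S ⊂ ℝ^N there exists a finite simplicial complex in ℝ^N whose space equals the convex hull of S. -/
open Set Geometry

namespace LexTri

/-- The first nonzero coordinate is negative. -/
def Neg {n : ℕ} (d : Fin n → ℝ) : Prop := ∃ i, (∀ j < i, d j = 0) ∧ d i < 0

lemma neg_or {n : ℕ} (d : Fin n → ℝ) (hd : d ≠ 0) : Neg d ∨ Neg (-d) := by
  classical
  obtain ⟨k, hk⟩ := Function.ne_iff.1 hd
  obtain ⟨i, hi, hmin⟩ := WellFounded.has_min (wellFounded_lt (α := Fin n))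
    {i | d i ≠ 0} ⟨k, hk⟩
  have h0 : ∀ j < i, d j = 0 := fun j hj => by
    by_contra h
    exact hmin j h hj
  rcases lt_or_gt_of_ne (show d i ≠ 0 from hi) with h | h
  · exact Or.inl ⟨i, h0, h⟩
  · exact Or.inr ⟨i, fun j hj => by simp [h0 j hj], by simpa using h⟩

lemma Neg.smul {n : ℕ} {d : Fin n → ℝ} (hd : Neg d) {e : ℝ} (he : 0 < e) : Neg (e • d) := by
  obtain ⟨i, h0, h⟩ := hd
  exact ⟨i, fun j hj => by simp [h0 j hj], by simpa using mul_neg_of_pos_of_neg he h⟩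

/-- Lexicographic minima exist on nonempty compact sets. -/
lemma exists_min {n : ℕ} (K : Set (Fin n → ℝ)) (hK : IsCompact K) (hne : K.Nonempty) :
    ∃ w ∈ K, ∀ w' ∈ K, ¬ Neg (w' - w) := by
  have key : ∀ k : ℕ, k ≤ n → ∃ L ⊆ K, IsCompact L ∧ L.Nonempty ∧
      ∀ w ∈ L, ∀ w' ∈ K, (∀ i : Fin n, i.1 < k → (∀ j < i, w' j = w j) → w i ≤ w' i) ∧
        ((∀ i : Fin n, i.1 < k → w' i = w i) → w' ∈ L) := by
    intro k
    induction k with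
    | zero => exact fun _ => ⟨K, subset_rfl, hK, hne, fun w _ w' hw' => ⟨by simp, fun _ => hw'⟩⟩
    | succ k ih =>
      intro hk
      obtain ⟨L, hLK, hL, hLne, h⟩ := ih (by omega)
      let a : Fin n := ⟨k, by omega⟩
      obtain ⟨m, hm, hmin⟩ := hL.exists_isMinOn hLne (f := fun w => w a) (by fun_prop)
      refine ⟨L ∩ {w | w a = m a}, fun w hw => hLK hw.1, ?_, ⟨m, hm, rfl⟩, ?_⟩
      · exact hL.inter_right (isClosed_eq (by fun_prop) (by fun_prop))
      · rintro w ⟨hw, hwa⟩ w' hw'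
        obtain ⟨h1, h2⟩ := h w hw w' hw'
        refine ⟨fun i hi hj => ?_, fun hi => ⟨h2 fun i hik => hi i (by omega), ?_⟩⟩
        · rcases Nat.lt_succ_iff_lt_or_eq.1 hi with hlt | heq
          · exact h1 i hlt hj
          · have hia : i = a := Fin.ext heq
            subst hia
            have : w' ∈ L := h2 fun j hjk => hj j hjk
            have := hmin this
            simp only [mem_ofPred_eq] at this hwa
            linarith
        · have := hi a (Nat.lt_succ_self k)
          simp only [mem_ofPred_eq] at hwa ⊢
          linarith
  obtain ⟨L, hLK, -, ⟨w, hw⟩, h⟩ := key n le_rfl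
  refine ⟨w, hLK hw, fun w' hw' hneg => ?_⟩
  obtain ⟨i, h0, hi⟩ := hneg
  have := (h w hw w' hw').1 i i.2 fun j hj => by
    have := h0 j hj
    simp only [Pi.sub_apply] at this
    linarith
  simp only [Pi.sub_apply] at hi
  linarith

variable {E : Type*} [AddCommGroup E] [Module ℝ E] {n : ℕ}

/-- Lexicographically optimal weights. -/
def Opt (v : Fin n → E) (w : Fin n → ℝ) : Prop :=
  ∀ d : Fin n → ℝ, ∑ i, d i = 0 → ∑ i, d i • v i = 0 → Neg d → ¬ ∀ i, 0 ≤ w i + d i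

/-- All weights on `T` are optimal. -/
def Good (v : Fin n → E) (T : Finset (Fin n)) : Prop :=
  ∀ w : Fin n → ℝ, (∀ i, 0 ≤ w i) → (∀ i ∉ T, w i = 0) → Opt v w

lemma exists_eps (w d : Fin n → ℝ) (hw : ∀ i, 0 ≤ w i) (hd : ∀ i, w i = 0 → 0 ≤ d i) :
    ∃ e > 0, ∀ i, 0 ≤ w i + e * d i := by
  have : ∀ᶠ e in nhdsWithin (0 : ℝ) (Ioi 0), ∀ i, 0 ≤ w i + e * d i := by
    rw [Filter.eventually_all]
    intro i
    rcases (hw i).eq_or_lt with h | h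
    · filter_upwards [self_mem_nhdsWithin] with e he
      rw [← h, zero_add]
      exact mul_nonneg (le_of_lt he) (hd i h.symm)
    · have hc : Filter.Tendsto (fun e : ℝ => w i + e * d i) (nhdsWithin 0 (Ioi 0))
          (nhds (w i + 0 * d i)) :=
        (Continuous.tendsto (by fun_prop) 0).mono_left nhdsWithin_le_nhds
      filter_upwards [hc.eventually (lt_mem_nhds (by simpa using h))] with e he
      exact he.le
  obtain ⟨e, h, he⟩ := (this.and self_mem_nhdsWithin).exists
  exact ⟨e, he, h⟩

lemma Opt.not {v : Fin n → E} {w : Fin n → ℝ} (h : Opt v w) (hw : ∀ i, 0 ≤ w i)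
    {d : Fin n → ℝ} (h1 : ∑ i, d i = 0) (h2 : ∑ i, d i • v i = 0)
    (hd : ∀ i, w i = 0 → 0 ≤ d i) : ¬ Neg d := by
  intro hn
  obtain ⟨e, he, hi⟩ := exists_eps w d hw hd
  refine h (e • d) ?_ ?_ (hn.smul he) hi
  · simp [← Finset.mul_sum, h1]
  · simp [mul_smul, ← Finset.smul_sum, h2]

lemma Opt.good {v : Fin n → E} {w : Fin n → ℝ} (h : Opt v w) (hw : ∀ i, 0 ≤ w i)
    {T : Finset (Fin n)} (hT : ∀ i ∈ T, w i ≠ 0) : Good v T := by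
  intro u hu huT d h1 h2 hn hd
  refine h.not hw h1 h2 (fun i hi => ?_) hn
  have := hd i
  rwa [huT i (fun hiT => hT i hiT hi), zero_add] at this

lemma Good.indep {v : Fin n → E} {T : Finset (Fin n)} (h : Good v T) {d : Fin n → ℝ}
    (h1 : ∑ i, d i = 0) (h2 : ∑ i, d i • v i = 0) (hd : ∀ i ∉ T, d i = 0) : d = 0 := by
  classical
  by_contra hne
  let w : Fin n → ℝ := fun i => if i ∈ T then 1 else 0
  have hw : ∀ i, 0 ≤ w i := fun i => by simp only [w]; split_ifs <;> norm_num
  have hz : ∀ i, w i = 0 → d i = 0 := fun i hi => hd i fun hiT => by simp [w, hiT] at hi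
  have ho : Opt v w := h w hw fun i hi => by simp [w, hi]
  rcases neg_or d hne with hn | hn
  · exact ho.not hw h1 h2 (fun i hi => (hz i hi).ge) hn
  · exact ho.not hw (by simp [h1]) (by simp [h2]) (fun i hi => by simp [hz i hi]) hn

lemma Opt.eq {v : Fin n → E} {w w' : Fin n → ℝ} (h : Opt v w) (h' : Opt v w')
    (hw : ∀ i, 0 ≤ w i) (hw' : ∀ i, 0 ≤ w' i) (h1 : ∑ i, w i = ∑ i, w' i)
    (h2 : ∑ i, w i • v i = ∑ i, w' i • v i) : w = w' := by
  by_contra hne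
  rcases neg_or (w' - w) (sub_ne_zero.2 (Ne.symm hne)) with hn | hn
  · exact h _ (by simp [h1]) (by simp [sub_smul, h2]) hn (by simpa using hw')
  · rw [neg_sub] at hn
    exact h' _ (by simp [h1]) (by simp [sub_smul, h2]) hn (by simpa using hw)

lemma mem_hull (v : Fin n ↪ E) (T : Finset (Fin n)) (x : E) :
    x ∈ convexHull ℝ (T.map v : Set E) ↔ ∃ w : Fin n → ℝ, (∀ i, 0 ≤ w i) ∧ (∀ i ∉ T, w i = 0) ∧
      ∑ i, w i = 1 ∧ ∑ i, w i • v i = x := by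
  classical
  constructor
  · intro hx
    rw [Finset.mem_convexHull'] at hx
    obtain ⟨w, h0, h1, h2⟩ := hx
    refine ⟨fun i => if i ∈ T then w (v i) else 0, fun i => ?_, fun i hi => by simp [hi], ?_, ?_⟩
    · dsimp only
      split_ifs with hi
      · exact h0 _ (Finset.mem_map_of_mem v hi)
      · exact le_rfl
    · rw [Finset.sum_map] at h1
      simpa using h1
    · rw [Finset.sum_map] at h2
      simpa [ite_smul] using h2
  · rintro ⟨w, h0, hT, h1, rfl⟩
    rw [← Finset.sum_subset (Finset.subset_univ T) (fun i _ hi => by simp [hT i hi])]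
    rw [← Finset.sum_subset (Finset.subset_univ T) (fun i _ hi => by simp [hT i hi])] at h1
    exact (convex_convexHull ℝ _).sum_mem (fun i _ => h0 i) h1
      (fun i hi => subset_convexHull ℝ _ (Finset.mem_coe.2 (Finset.mem_map_of_mem v hi)))

lemma Good.affineIndependent {v : Fin n ↪ E} {T : Finset (Fin n)} (h : Good v T) :
    AffineIndependent ℝ (fun x : {x // x ∈ T.map v} => (x : E)) := by
  classical
  let eqv : {i // i ∈ T} ≃ {x // x ∈ T.map v} :=
    Equiv.ofBijective (fun i => ⟨v i, Finset.mem_map_of_mem v i.2⟩)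
      ⟨fun i j hij => Subtype.ext (v.injective (congrArg Subtype.val hij)), fun x => by
        obtain ⟨i, hi, hix⟩ := Finset.mem_map.1 x.2
        exact ⟨⟨i, hi⟩, Subtype.ext hix⟩⟩
  have hcomp : (fun x : {x // x ∈ T.map v} => (x : E)) ∘ eqv = fun i : {i // i ∈ T} => v i.1 := rfl
  rw [← affineIndependent_equiv eqv, hcomp, affineIndependent_iff]
  intro s w h1 h2 e he
  let d : Fin n → ℝ := fun i => if h : i ∈ T then (if ⟨i, h⟩ ∈ s then w ⟨i, h⟩ else 0) else 0
  have hdT : ∀ i ∉ T, d i = 0 := fun i hi => by simp [d, hi]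
  have hd : ∀ i : T, d i = if i ∈ s then w i else 0 := fun i => by simp [d]
  have hs : T.attach ∩ s = s := Finset.inter_eq_right.2 fun i _ => Finset.mem_attach T i
  have hd0 : d = 0 := by
    refine h.indep ?_ ?_ hdT
    · rw [← Finset.sum_subset (Finset.subset_univ T) (fun i _ hi => hdT i hi),
        ← Finset.sum_coe_sort T]
      simpa [hd, hs] using h1
    · rw [← Finset.sum_subset (Finset.subset_univ T) (fun i _ hi => by simp [hdT i hi]),
        ← Finset.sum_coe_sort T]
      simpa [hd, hs, ite_smul] using h2
  have := hd e
  rw [hd0, if_pos he] at this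
  exact this.symm

/-- The lexicographic triangulation. -/
def complex (v : Fin n ↪ E) : SimplicialComplex ℝ E :=
  SimplicialComplex.ofErase (Finset.map v '' {T | Good v T})
    (by
      rintro _ ⟨T, hT, rfl⟩
      exact Good.affineIndependent hT)
    (by
      classical
      rintro _ s hs ⟨T, hT, rfl⟩
      obtain ⟨U, hU, rfl⟩ := Finset.subset_map_iff.1 hs
      exact ⟨U, fun w hw hwU => hT w hw fun i hi => hwU i fun h => hi (hU h), rfl⟩)
    (by
      classical
      rintro _ ⟨T, hT, rfl⟩ _ ⟨U, hU, rfl⟩ x ⟨hx, hx'⟩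
      obtain ⟨w, h0, hwT, h1, h2⟩ := (mem_hull v T x).1 hx
      obtain ⟨w', h0', hwT', h1', h2'⟩ := (mem_hull v U x).1 hx'
      have heq := (hT w h0 hwT).eq (hU w' h0' hwT') h0 h0' (h1.trans h1'.symm) (h2.trans h2'.symm)
      subst heq
      rw [← Finset.coe_inter, ← Finset.map_inter]
      refine (mem_hull v _ x).2 ⟨w, h0, fun i hi => ?_, h1, h2⟩
      by_cases hiT : i ∈ T
      · exact hwT' i fun hiU => hi (Finset.mem_inter.2 ⟨hiT, hiU⟩)
      · exact hwT i hiT)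

end LexTri

open LexTri

/-- Every compact convex polytope in `ℝ^N` — the convex hull of a finite set — is the space of
some finite simplicial complex. -/
theorem statement5 (N : ℕ) (S : Finset (EuclideanSpace ℝ (Fin N))) :
    ∃ K : SimplicialComplex ℝ (EuclideanSpace ℝ (Fin N)),
      K.faces.Finite ∧ K.space = convexHull ℝ (S : Set (EuclideanSpace ℝ (Fin N))) := by
  classical
  let v : Fin S.card ↪ EuclideanSpace ℝ (Fin N) :=
    S.equivFin.symm.toEmbedding.trans (Function.Embedding.subtype _)
  have hv : Finset.univ.map v = S := by
    ext x
    simp only [Finset.mem_map, Finset.mem_univ, true_and]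
    constructor
    · rintro ⟨i, rfl⟩
      exact (S.equivFin.symm i).2
    · intro hx
      exact ⟨S.equivFin ⟨x, hx⟩, by simp [v]⟩
  refine ⟨complex v, (Set.Finite.image _ (Set.toFinite _)).subset sdiff_subset, ?_⟩
  suffices h : (complex v).space =
      convexHull ℝ (Finset.univ.map v : Set (EuclideanSpace ℝ (Fin N))) by
    rw [h, hv]
  ext x
  rw [SimplicialComplex.mem_space_iff]
  constructor
  · rintro ⟨_, ⟨⟨T, hT, rfl⟩, -⟩, hx⟩
    exact convexHull_mono (Finset.coe_subset.2 (Finset.map_subset_map.2 (Finset.subset_univ T))) hx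
  · intro hx
    obtain ⟨w₀, h0, -, h1, h2⟩ := (mem_hull v _ x).1 hx
    let K : Set (Fin S.card → ℝ) := stdSimplex ℝ (Fin S.card) ∩ {w | ∑ i, w i • v i = x}
    have hK : IsCompact K := (isCompact_stdSimplex ℝ _).inter_right
      (isClosed_eq (by fun_prop) (by fun_prop))
    obtain ⟨w, ⟨⟨hw0, hw1⟩, hw2⟩, hmin⟩ := exists_min K hK ⟨w₀, ⟨h0, h1⟩, h2⟩
    have hopt : Opt v w := by
      intro d hd1 hd2 hn hd
      refine hmin (w + d) ⟨⟨hd, ?_⟩, ?_⟩ (by simpa using hn)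
      · simp [Finset.sum_add_distrib, hw1, hd1]
      · simp only [mem_ofPred_eq] at hw2
        simp [add_smul, Finset.sum_add_distrib, hw2, hd2]
    let T : Finset (Fin S.card) := Finset.univ.filter fun i => w i ≠ 0
    have hxT : x ∈ convexHull ℝ (T.map v : Set (EuclideanSpace ℝ (Fin N))) :=
      (mem_hull v T x).2 ⟨w, hw0, fun i hi => by simpa [T] using hi, hw1, hw2⟩
    refine ⟨T.map v, ⟨⟨T, hopt.good hw0 fun i hi => by simpa [T] using hi, rfl⟩, ?_⟩, hxT⟩
    intro he
    rw [Set.mem_singleton_iff] at he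
    rw [he] at hxT
    simp at hxT
end
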